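/- Let U be an open set in ℝ^n, n ≥ 3, and let φ:(0,∞)→(0,∞) be a nondecreasing function satisfying ∫_{t_*}^∞ (t/φ(t))^{1/(n−2)} dt < ∞ for some t_* ∈ (0,∞). Then every continuous mapping f:U→ℝ^m, m ≥ 1, of class W^{1,φ}_loc possesses the Luzin (N)-property with respect to (n−1)-dimensional Hausdorff measure on almost every hyperplane P parallel to an arbitrary fixed hyperplane P_0; moreover, f is locally absolutely continuous on almost all such hyperplanes, and on almost all such P one has H^{n−1}(f(E)) = 0 whenever |∇f| = 0 on E ⊂ P. -/

import Mathlib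

open MeasureTheory Metric Set Filter
open scoped ENNReal NNReal Topology RealInnerProductSpace Classical

noncomputable section

abbrev Eucl (n : ℕ) : Type := EuclideanSpace ℝ (Fin n)

/-- A `k`-dimensional surface in `ℝⁿ`: a continuous map defined on an open subset of the
one-point compactification of `ℝᵏ`. -/
structure Surface (n k : ℕ) where
  dom : Set (OnePoint (Eucl k))
  isOpen_dom : IsOpen dom
  toFun : OnePoint (Eucl k) → Eucl n
  continuousOn : ContinuousOn toFun dom

namespace Surface

variable {n k : ℕ}

/-- The multiplicity function `N(S,y)` of a surface. -/
def mult (S : Surface n k) (y : Eucl n) : ℝ≥0∞ :=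
  ((S.dom ∩ S.toFun ⁻¹' {y}).encard : ℕ∞)

/-- The integral `∫_S ρ dA = ∫ ρ(y) N(S,y) dH^k(y)` of `ρ` over the surface `S`. -/
def sint (S : Surface n k) (ρ : Eucl n → ℝ≥0∞) : ℝ≥0∞ :=
  ∫⁻ y, ρ y * S.mult y ∂(μH[(k : ℝ)] : Measure (Eucl n))

end Surface

/-- Admissible functions for a family of `k`-surfaces. -/
def surfAdm {n : ℕ} (k : ℕ) (Γ : Set (Surface n k)) : Set (Eucl n → ℝ≥0∞) :=
  {ρ | Measurable ρ ∧ ∀ S ∈ Γ, 1 ≤ S.sint fun y => ρ y ^ k}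

/-- The `p`-modulus of a family of `k`-surfaces. -/
def surfModulus {n : ℕ} (p : ℝ) (k : ℕ) (Γ : Set (Surface n k)) : ℝ≥0∞ :=
  ⨅ ρ ∈ surfAdm k Γ, ∫⁻ x, ρ x ^ p

/-- Extensively `p`-admissible functions: admissibility may fail on a subfamily of
`p`-modulus zero. -/
def extAdm {n : ℕ} (p : ℝ) (k : ℕ) (Γ : Set (Surface n k)) : Set (Eucl n → ℝ≥0∞) :=
  {ρ | Measurable ρ ∧ surfModulus p k {S ∈ Γ | ¬ 1 ≤ S.sint fun y => ρ y ^ k} = 0}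

/-- The family of the (injectively parametrized, nonempty) surfaces `S(x₀,r) ∩ D`,
`r ∈ I`. -/
def sphereFam {n : ℕ} (D : Set (Eucl n)) (x₀ : Eucl n) (I : Set ℝ) :
    Set (Surface n (n - 1)) :=
  {S | ∃ r ∈ I, S.dom.Nonempty ∧ Set.InjOn S.toFun S.dom ∧
      S.toFun '' S.dom = sphere x₀ r ∩ D}

/-- The image of a family of surfaces under a map `f`. -/
def imageFam {n k : ℕ} (f : Eucl n → Eucl n) (Γ : Set (Surface n k)) :
    Set (Surface n k) :=
  {S' | ∃ S ∈ Γ, S'.dom = S.dom ∧ Set.EqOn S'.toFun (f ∘ S.toFun) S.dom}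

/-- The spherical ring `R(x₀,a,b)`. -/
def ringA {n : ℕ} (x₀ : Eucl n) (a b : ℝ) : Set (Eucl n) :=
  {x | a < dist x x₀ ∧ dist x x₀ < b}

/-- `‖Q‖_α(r) = (∫_{D ∩ S(x₀,r)} Q^α dA)^{1/α}`. -/
def sphNorm {n : ℕ} (D : Set (Eucl n)) (x₀ : Eucl n) (Q : Eucl n → ℝ≥0∞)
    (α : ℝ) (r : ℝ) : ℝ≥0∞ :=
  (∫⁻ x in D ∩ sphere x₀ r, Q x ^ α ∂(μH[((n : ℝ) - 1)] : Measure (Eucl n))) ^ (1 / α)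

/-- `f` is a lower `Q`-homeomorphism w.r.t. the `p`-modulus at `x₀`. -/
def IsLowerQHomeoAt {n : ℕ} (D : Set (Eucl n)) (f : Eucl n → Eucl n)
    (Q : Eucl n → ℝ≥0∞) (p : ℝ) (x₀ : Eucl n) (d₀ : ℝ≥0∞) : Prop :=
  ∀ ε ε₀ : ℝ, 0 < ε → ε < ε₀ → ENNReal.ofReal ε₀ < d₀ →
    (⨅ ρ ∈ extAdm p (n - 1) (sphereFam D x₀ (Ioo ε ε₀)),
        ∫⁻ x in ringA x₀ ε ε₀, ρ x ^ p / Q x) ≤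
      surfModulus p (n - 1) (imageFam f (sphereFam D x₀ (Ioo ε ε₀)))

/-- `f` is a homeomorphism of `D` onto `D'`. -/
structure IsHomeoOn {n : ℕ} (f : Eucl n → Eucl n) (D D' : Set (Eucl n)) : Prop where
  continuousOn : ContinuousOn f D
  injOn : Set.InjOn f D
  image_eq : f '' D = D'
  isOpenMapOn : ∀ U : Set (Eucl n), U ⊆ D → IsOpen U → IsOpen (f '' U)

/-- `Df` is the weak (Sobolev) derivative of `f` on `D`, and `f ∈ W^{1,1}_loc(D)`. -/
def IsWeakDerivOn {n m : ℕ} (D : Set (Eucl n)) (f : Eucl n → Eucl m)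
    (Df : Eucl n → Eucl n →L[ℝ] Eucl m) : Prop :=
  LocallyIntegrableOn f D volume ∧ LocallyIntegrableOn Df D volume ∧
  ∀ ψ : Eucl n → ℝ, ContDiff ℝ (⊤ : ℕ∞) ψ → HasCompactSupport ψ → tsupport ψ ⊆ D →
    ∀ v : Eucl n, ∫ x, ψ x • Df x v = - ∫ x, fderiv ℝ ψ x v • f x

/-- The Frobenius norm `|∇f| = (Σ_{i,j} (∂f_i/∂x_j)²)^{1/2}` of a linear map. -/
def frobNorm {n m : ℕ} (A : Eucl n →L[ℝ] Eucl m) : ℝ :=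
  Real.sqrt (∑ i : Fin m, ∑ j : Fin n, (A (EuclideanSpace.single j 1) i) ^ 2)

/-- The Orlicz–Sobolev class `W^{1,φ}_loc(D)` (with explicit weak derivative `Df`). -/
def MemOrliczSobolevOn {n m : ℕ} (φ : ℝ → ℝ) (D : Set (Eucl n))
    (f : Eucl n → Eucl m) (Df : Eucl n → Eucl n →L[ℝ] Eucl m) : Prop :=
  IsWeakDerivOn D f Df ∧
  ∀ K : Set (Eucl n), K ⊆ D → IsCompact K →
    (∫⁻ x in K, ENNReal.ofReal (φ (frobNorm (Df x)))) < ⊤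

/-- `φ` is nondecreasing and positive on `(0,∞)`. -/
def NondecPos (φ : ℝ → ℝ) : Prop :=
  (∀ s t : ℝ, 0 < s → s ≤ t → φ s ≤ φ t) ∧ ∀ t : ℝ, 0 < t → 0 < φ t

/-- The Calderón-type condition `∫_{t₀}^∞ (t/φ(t))^{1/(n-2)} dt < ∞`. -/
def CalderonCond (n : ℕ) (φ : ℝ → ℝ) : Prop :=
  ∃ t₀ : ℝ, 0 < t₀ ∧
    IntegrableOn (fun t => (t / φ t) ^ (1 / ((n : ℝ) - 2))) (Ioi t₀) volume

/-- `f` (with a.e. derivative `Df`) has finite distortion on `D`. -/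
def HasFiniteDistortionOn {n : ℕ} (D : Set (Eucl n))
    (Df : Eucl n → Eucl n →L[ℝ] Eucl n) : Prop :=
  ∃ K : Eucl n → ℝ, AEMeasurable K (volume.restrict D) ∧
    ∀ᵐ x ∂volume.restrict D, 1 ≤ K x ∧ ‖Df x‖ ^ n ≤ K x * (Df x).det

/-- The distortion `K_p(x,f)` for a map with derivative `Df`. -/
def distortionKp {n : ℕ} (p : ℝ) (Df : Eucl n → Eucl n →L[ℝ] Eucl n)
    (x : Eucl n) : ℝ≥0∞ :=
  if (Df x).det ≠ 0 then ENNReal.ofReal (‖Df x‖ ^ p / (Df x).det)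
  else if Df x = 0 then 1 else ⊤

/-- The multiplicity function of a curve `γ : [0,1] → ℝⁿ`. -/
def curveMult {n : ℕ} (γ : ℝ → Eucl n) (y : Eucl n) : ℝ≥0∞ :=
  (({t ∈ Icc (0:ℝ) 1 | γ t = y}).encard : ℕ∞)

/-- The line integral `∫_γ ρ ds = ∫ ρ(y) N(γ,y) dH¹(y)`. -/
def curveInt {n : ℕ} (γ : ℝ → Eucl n) (ρ : Eucl n → ℝ≥0∞) : ℝ≥0∞ :=
  ∫⁻ y, ρ y * curveMult γ y ∂(μH[(1 : ℝ)] : Measure (Eucl n))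

/-- The family of curves joining `A` and `B` in `G`. -/
def curveJoin {n : ℕ} (A B G : Set (Eucl n)) : Set (ℝ → Eucl n) :=
  {γ | ContinuousOn γ (Icc 0 1) ∧ γ 0 ∈ A ∧ γ 1 ∈ B ∧ Set.MapsTo γ (Icc 0 1) G}

/-- The `q`-modulus of a family of curves. -/
def curveModulus {n : ℕ} (q : ℝ) (Γ : Set (ℝ → Eucl n)) : ℝ≥0∞ :=
  ⨅ ρ ∈ {ρ : Eucl n → ℝ≥0∞ | Measurable ρ ∧ ∀ γ ∈ Γ, 1 ≤ curveInt γ ρ},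
    ∫⁻ x, ρ x ^ q

/-- The `q`-capacity of the condenser `(A,C)`, via the modulus of joining curves. -/
def condenserCap {n : ℕ} (q : ℝ) (A C : Set (Eucl n)) : ℝ≥0∞ :=
  curveModulus q (curveJoin (frontier A) (frontier C) (A \ C))

/-- `L(x₀,f) = limsup_{x→x₀} |f(x)-f(x₀)|/|x-x₀|`. -/
def LAt {n : ℕ} (f : Eucl n → Eucl n) (x₀ : Eucl n) : ℝ≥0∞ :=
  limsup (fun x => edist (f x) (f x₀) / edist x x₀) (𝓝[≠] x₀)

/-- `k_p(x₀) = limsup_{ε→0} (⨍_{B(x₀,ε)} K_p(x,f)^{(n-1)/(p-n+1)} dm)^{(p-n+1)/(n-1)}`. -/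
def kpAt {n : ℕ} (p : ℝ) (Df : Eucl n → Eucl n →L[ℝ] Eucl n) (x₀ : Eucl n) : ℝ≥0∞ :=
  limsup (fun ε : ℝ =>
      ((∫⁻ x in ball x₀ ε, distortionKp p Df x ^ (((n:ℝ)-1)/(p-(n:ℝ)+1))) /
        volume (ball x₀ ε)) ^ ((p-(n:ℝ)+1)/((n:ℝ)-1)))
    (𝓝[>] (0:ℝ))

/-- `f` is absolutely continuous on `S` w.r.t. `d`-dimensional Hausdorff measure. -/
def ACOnSet {n m : ℕ} (f : Eucl n → Eucl m) (S : Set (Eucl n)) (d : ℝ) : Prop :=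
  ∀ ε : ℝ, 0 < ε → ∃ δ : ℝ, 0 < δ ∧ ∀ A : Set (Eucl n), A ⊆ S →
    (μH[d] : Measure (Eucl n)) A < ENNReal.ofReal δ →
      (μH[d] : Measure (Eucl m)) (f '' A) < ENNReal.ofReal ε

/-- `f` is locally absolutely continuous on `S` w.r.t. `H^d`. -/
def LocACOnSet {n m : ℕ} (f : Eucl n → Eucl m) (S : Set (Eucl n)) (d : ℝ) : Prop :=
  ∀ x ∈ S, ∃ V ∈ 𝓝 x, ACOnSet f (S ∩ V) d

/-- The Luzin (N)-property of `f` on `S` w.r.t. `d`-dimensional Hausdorff measure. -/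
def LusinNOn {n m : ℕ} (f : Eucl n → Eucl m) (S : Set (Eucl n)) (d : ℝ) : Prop :=
  ∀ A : Set (Eucl n), A ⊆ S → (μH[d] : Measure (Eucl n)) A = 0 →
    (μH[d] : Measure (Eucl m)) (f '' A) = 0

end

/-!
Write `k = n - 1`, let `h` be the restriction of `f` to a hyperplane and `g` that of `|∇f|`. By
Fubini's theorem, on almost every hyperplane `|h y - h x|` is at most `|y - x|` times the mean of
`g` over the segment `[x, y]`, for almost every pair `(x, y)`. Fix `x` in a ball `B` and choose
first `y ∈ B` and then a point of `[x, y]` at random: this point lies in a set `A` with probability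
at most `2 (|A ∩ B| / |B|) ^ (1 / k)`. Decomposing `g` into the dyadic layers
`{2 ^ i s < g ≤ 2 ^ (i + 1) s}` and applying Hölder's inequality with weights `φ (2 ^ i s)`, where
the dual sum converges by Calderón's condition, one gets
`diam (h '' B) ^ k ≤ ∫_B ρ` with `ρ = C s ^ k + C_s φ(g) 1_{g > s}`.
A Besicovitch covering by small balls upgrades this to `H^k (h '' A) ≤ ∫_A ρ`, which is absolute
continuity. Where `g = 0` only the term `C s ^ k` survives, and `s` is arbitrary.
-/

section SegmentAverages

lemma lintegral_Ioi_rpow_neg_le {p T : ℝ} (hp : 2 ≤ p) (hT : 0 < T) :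
    ∫⁻ τ in Ioi T, ENNReal.ofReal (τ ^ (-p)) ≤ ENNReal.ofReal (T ^ (1 - p)) := by
  have nonneg : 0 ≤ᵐ[volume.restrict (Ioi T)] fun τ => τ ^ (-p) := by
    filter_upwards [ae_restrict_mem measurableSet_Ioi] with τ hτ
    exact Real.rpow_nonneg (hT.trans hτ).le _
  rw [← ofReal_integral_eq_lintegral_ofReal (integrableOn_Ioi_rpow_of_lt (by linarith) hT) nonneg,
    integral_Ioi_rpow_of_lt (by linarith) hT, neg_div, ← div_neg,
    show -p + 1 = 1 - p by ring, show -(1 - p) = p - 1 by ring]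
  exact ENNReal.ofReal_le_ofReal (div_le_self (by positivity) (by linarith))

/-- Use the first bound on `u` below the threshold `T` and the second one above it. -/
lemma lintegral_Ioo_le_add_of_pow_mul_le {k : ℕ} (hk : 2 ≤ k) {u : ℝ → ℝ≥0∞} {a b : ℝ≥0∞}
    (hb : ∀ τ ∈ Ioo (0 : ℝ) 1, u τ ≤ b)
    (ha : ∀ τ ∈ Ioo (0 : ℝ) 1, ENNReal.ofReal (τ ^ k) * u τ ≤ a) {T : ℝ} (hT : 0 < T) :
    ∫⁻ τ in Ioo (0 : ℝ) 1, u τ ≤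
      b * ENNReal.ofReal T + a * ENNReal.ofReal (T ^ (1 - k : ℝ)) := by
  have cover : Ioo (0 : ℝ) 1 ⊆ (Ioc 0 T ∩ Ioo 0 1) ∪ (Ioi T ∩ Ioo 0 1) := fun τ hτ =>
    (le_or_gt τ T).imp (fun h => ⟨⟨hτ.1, h⟩, hτ⟩) (fun h => ⟨h, hτ⟩)
  have below : ∫⁻ τ in Ioc 0 T ∩ Ioo 0 1, u τ ≤ b * ENNReal.ofReal T :=
    calc ∫⁻ τ in Ioc 0 T ∩ Ioo 0 1, u τ
        ≤ ∫⁻ _ in Ioc 0 T ∩ Ioo 0 1, b :=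
          setLIntegral_mono' (by measurability) fun τ hτ => hb τ hτ.2
      _ ≤ ∫⁻ _ in Ioc 0 T, b := lintegral_mono_set inter_subset_left
      _ = b * ENNReal.ofReal T := by simp
  have above : ∫⁻ τ in Ioi T ∩ Ioo 0 1, u τ ≤ a * ENNReal.ofReal (T ^ (1 - k : ℝ)) :=
    calc ∫⁻ τ in Ioi T ∩ Ioo 0 1, u τ
        ≤ ∫⁻ τ in Ioi T ∩ Ioo 0 1, a * ENNReal.ofReal (τ ^ (-k : ℝ)) := by
          refine setLIntegral_mono' (by measurability) fun τ hτ => ?_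
          have pos : 0 < τ ^ k := pow_pos hτ.2.1 k
          rw [Real.rpow_neg hτ.2.1.le, Real.rpow_natCast, ENNReal.ofReal_inv_of_pos pos,
            ← div_eq_mul_inv, ENNReal.le_div_iff_mul_le (by simp [pos]) (by simp), mul_comm]
          exact ha τ hτ.2
      _ ≤ ∫⁻ τ in Ioi T, a * ENNReal.ofReal (τ ^ (-k : ℝ)) := lintegral_mono_set inter_subset_left
      _ ≤ a * ENNReal.ofReal (T ^ (1 - k : ℝ)) := by
          rw [lintegral_const_mul _ (by fun_prop)]
          gcongr
          exact lintegral_Ioi_rpow_neg_le (by exact_mod_cast hk) hT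
  calc ∫⁻ τ in Ioo (0 : ℝ) 1, u τ
      ≤ ∫⁻ τ in (Ioc 0 T ∩ Ioo 0 1) ∪ (Ioi T ∩ Ioo 0 1), u τ := lintegral_mono_set cover
    _ ≤ _ := lintegral_union_le _ _ _
    _ ≤ _ := add_le_add below above

lemma lintegral_Ioo_le_of_pow_mul_le {k : ℕ} (hk : 2 ≤ k) {u : ℝ → ℝ≥0∞} {a b : ℝ≥0∞}
    (b_ne_zero : b ≠ 0) (b_ne_top : b ≠ ⊤) (hb : ∀ τ ∈ Ioo (0 : ℝ) 1, u τ ≤ b)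
    (ha : ∀ τ ∈ Ioo (0 : ℝ) 1, ENNReal.ofReal (τ ^ k) * u τ ≤ a) :
    ∫⁻ τ in Ioo (0 : ℝ) 1, u τ ≤ 2 * b * (a / b) ^ (1 / k : ℝ) := by
  have k_pos : (0 : ℝ) < k := by positivity
  rcases eq_or_ne a 0 with rfl | a_ne_zero
  · refine (setLIntegral_mono' (g := fun _ => 0) measurableSet_Ioo fun τ hτ => ?_).trans (by simp)
    simpa [(pow_pos hτ.1 k).not_ge] using ha τ hτ
  rcases eq_or_ne a ⊤ with rfl | a_ne_top
  · simp [ENNReal.top_div, b_ne_top, b_ne_zero, ENNReal.top_rpow_of_pos (inv_pos.2 k_pos)]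
  have ratio_ne_top : a / b ≠ ⊤ := ENNReal.div_ne_top a_ne_top b_ne_zero
  have ratio_pos : 0 < (a / b).toReal :=
    ENNReal.toReal_pos (ENNReal.div_ne_zero.2 ⟨a_ne_zero, b_ne_top⟩) ratio_ne_top
  set T : ℝ := (a / b).toReal ^ (1 / k : ℝ) with T_def
  have T_pos : 0 < T := by positivity
  have ofReal_T : ENNReal.ofReal T = (a / b) ^ (1 / k : ℝ) := by
    rw [T_def, ← ENNReal.ofReal_rpow_of_pos ratio_pos, ENNReal.ofReal_toReal ratio_ne_top]
  have a_eq : a = b * ENNReal.ofReal (T ^ (k : ℝ)) := by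
    rw [T_def, ← Real.rpow_mul ratio_pos.le, one_div_mul_cancel k_pos.ne', Real.rpow_one,
      ENNReal.ofReal_toReal ratio_ne_top, ENNReal.mul_div_cancel b_ne_zero b_ne_top]
  calc ∫⁻ τ in Ioo (0 : ℝ) 1, u τ
      ≤ b * ENNReal.ofReal T + a * ENNReal.ofReal (T ^ (1 - k : ℝ)) :=
        lintegral_Ioo_le_add_of_pow_mul_le hk hb ha T_pos
    _ = b * ENNReal.ofReal T + b * ENNReal.ofReal T := by
        rw [a_eq, mul_assoc b, ← ENNReal.ofReal_mul (by positivity), ← Real.rpow_add T_pos,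
          add_sub_cancel, Real.rpow_one]
    _ = 2 * b * (a / b) ^ (1 / k : ℝ) := by rw [ofReal_T, ← two_mul, mul_assoc]

variable {F : Type*} [NormedAddCommGroup F] [NormedSpace ℝ F]

/-- The average `∫₀¹ g (x + τ h) dτ` of `g` over the segment from `x` to `x + h`. -/
noncomputable def segmentAvg (g : F → ℝ≥0∞) (x h : F) : ℝ≥0∞ :=
  ∫⁻ τ in Ioo (0 : ℝ) 1, g (x + τ • h)

variable [MeasurableSpace F] [BorelSpace F] [SecondCountableTopology F]

lemma measurable_segmentAvg {g : F → ℝ≥0∞} (hg : Measurable g) :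
    Measurable fun p : F × F => segmentAvg g p.1 p.2 :=
  Measurable.lintegral_prod_right' (f := fun q : (F × F) × ℝ => g (q.1.1 + q.2 • q.1.2))
    (hg.comp (by fun_prop))

lemma measurableSet_edist_le_segmentAvg {Y : Type*} [PseudoEMetricSpace Y] {W : Set F} {f : F → Y}
    (hW : IsOpen W) (hf : ContinuousOn f W) {g : F → ℝ≥0∞} (hg : Measurable g) :
    MeasurableSet {p : F × F | p.1 ∈ W → p.1 + p.2 ∈ W →
      edist (f p.1) (f (p.1 + p.2)) ≤ ‖p.2‖ₑ * segmentAvg g p.1 p.2} := by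
  set O : Set (F × F) := {p | p.1 ∈ W ∧ p.1 + p.2 ∈ W}
  have O_meas : MeasurableSet O :=
    ((hW.preimage continuous_fst).inter (hW.preimage continuous_add)).measurableSet
  have edist_continuousOn : ContinuousOn (fun p : F × F => edist (f p.1) (f (p.1 + p.2))) O :=
    continuous_edist.comp_continuousOn ((hf.comp continuousOn_fst fun _ hp => hp.1).prodMk
      (hf.comp continuous_add.continuousOn fun _ hp => hp.2))
  have edist_meas : Measurable (O.indicator fun p : F × F => edist (f p.1) (f (p.1 + p.2))) := by
    rw [← piecewise_eq_indicator]
    exact edist_continuousOn.measurable_piecewise continuousOn_const O_meas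
  convert measurableSet_le edist_meas (measurable_snd.enorm.mul (measurable_segmentAvg hg))
    using 1
  ext p
  by_cases hp : p ∈ O
  · simp only [mem_ofPred_eq, indicator_of_mem hp, hp.1, hp.2, forall_const, Pi.mul_apply]
  · simp only [mem_ofPred_eq, indicator_of_notMem hp, zero_le, iff_true]
    exact fun h₁ h₂ => (hp ⟨h₁, h₂⟩).elim

/-- The distribution of a point chosen uniformly on the segment from `x` to a point of `B` that is
itself chosen according to `ν`. Integrals against this measure are iterated integrals along the
segments, see `lintegral_segmentMeasure`. -/
noncomputable def segmentMeasure (ν : Measure F) (B : Set F) (x : F) : Measure F :=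
  ((ν.restrict B).prod (volume.restrict (Ioo (0 : ℝ) 1))).map fun p => x + p.2 • (p.1 - x)

lemma lintegral_segmentMeasure (ν : Measure F) (B : Set F) (x : F) {g : F → ℝ≥0∞}
    (hg : Measurable g) :
    ∫⁻ z, g z ∂segmentMeasure ν B x = ∫⁻ y in B, segmentAvg g x (y - x) ∂ν := by
  have hm : Measurable fun p : F × ℝ => x + p.2 • (p.1 - x) := by fun_prop
  rw [segmentMeasure, lintegral_map hg hm]
  exact lintegral_prod _ (hg.comp hm).aemeasurable

lemma segmentMeasure_univ (ν : Measure F) (B : Set F) (x : F) :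
    segmentMeasure ν B x univ = ν B := by
  rw [← lintegral_one, lintegral_segmentMeasure ν B x measurable_const]
  simp [segmentAvg]

/-- For fixed `τ` the points `y ∈ B` with `x + τ (y - x) ∈ A` are mapped into `A ∩ B` by a
homothety, so they have measure at most `τ⁻ᵏ ν (A ∩ B)`, besides the trivial bound `ν B`. -/
lemma segmentMeasure_le [FiniteDimensional ℝ F] (ν : Measure F) [ν.IsAddHaarMeasure]
    (hk : 2 ≤ Module.finrank ℝ F) {B : Set F} (hB : Convex ℝ B) (B_ne_zero : ν B ≠ 0)
    (B_ne_top : ν B ≠ ⊤) {x : F} (hx : x ∈ B) {A : Set F} (hA : MeasurableSet A) :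
    segmentMeasure ν B x A ≤
      2 * ν B * (ν (A ∩ B) / ν B) ^ (1 / Module.finrank ℝ F : ℝ) := by
  have : IsFiniteMeasure (ν.restrict B) := ⟨by simpa using B_ne_top.lt_top⟩
  have hm : Measurable fun p : F × ℝ => x + p.2 • (p.1 - x) := by fun_prop
  rw [segmentMeasure, Measure.map_apply hm hA, Measure.prod_apply_symm (hm hA)]
  have slice_eq (τ : ℝ) : ν.restrict B ((fun y => (y, τ)) ⁻¹' ((fun p : F × ℝ =>
      x + p.2 • (p.1 - x)) ⁻¹' A)) = ν ((AffineMap.homothety x τ ⁻¹' A) ∩ B) := by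
    rw [Measure.restrict_apply (by measurability)]
    congr 2
    ext y
    simp [AffineMap.homothety_apply, add_comm]
  simp only [slice_eq]
  refine lintegral_Ioo_le_of_pow_mul_le hk B_ne_zero B_ne_top
    (fun τ _ => measure_mono inter_subset_right) fun τ hτ => ?_
  rw [← abs_of_pos (pow_pos hτ.1 (Module.finrank ℝ F)), ← Measure.addHaar_image_homothety ν x τ]
  refine measure_mono ?_
  rintro _ ⟨y, ⟨hyA, hyB⟩, rfl⟩
  refine ⟨hyA, ?_⟩
  rw [AffineMap.homothety_eq_lineMap]
  exact hB.lineMap_mem hx hyB ⟨hτ.1.le, hτ.2.le⟩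

end SegmentAverages

section DyadicLayers

lemma monotone_two_pow_mul {s : ℝ} (hs : 0 ≤ s) : Monotone fun i : ℕ => (2 : ℝ) ^ i * s :=
  fun _ _ hij => mul_le_mul_of_nonneg_right (pow_le_pow_right₀ one_le_two hij) hs

lemma iUnion_Ioc_two_pow_mul {s : ℝ} (hs : 0 < s) :
    ⋃ i : ℕ, Ioc ((2 : ℝ) ^ i * s) (2 ^ (i + 1) * s) = Ioi s := by
  have unbounded : ¬BddAbove (range fun i : ℕ => (2 : ℝ) ^ i * s) :=
    not_bddAbove_of_tendsto_atTop
      ((tendsto_pow_atTop_atTop_of_one_lt one_lt_two).atTop_mul_const hs)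
  simpa using iUnion_Ioc_map_succ_eq_Ioi
    (fun i => monotone_two_pow_mul hs.le (Nat.zero_le i)) unbounded

lemma pairwise_disjoint_Ioc_two_pow_mul {s : ℝ} (hs : 0 ≤ s) :
    Pairwise (Function.onFun Disjoint fun i : ℕ => Ioc ((2 : ℝ) ^ i * s) (2 ^ (i + 1) * s)) :=
  (monotone_two_pow_mul hs).pairwise_disjoint_on_Ioc_succ

variable {α : Type*}

/-- The part `{2ⁱ s < g ≤ 2ⁱ⁺¹ s}` of the domain of `g`. -/
def dyadicLayer (g : α → ℝ) (s : ℝ) (i : ℕ) : Set α :=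
  g ⁻¹' Ioc (2 ^ i * s) (2 ^ (i + 1) * s)

lemma iUnion_dyadicLayer (g : α → ℝ) {s : ℝ} (hs : 0 < s) :
    ⋃ i, dyadicLayer g s i = {z | s < g z} := by
  simp only [dyadicLayer, ← preimage_iUnion, iUnion_Ioc_two_pow_mul hs]
  rfl

lemma pairwise_disjoint_dyadicLayer (g : α → ℝ) {s : ℝ} (hs : 0 ≤ s) :
    Pairwise (Function.onFun Disjoint (dyadicLayer g s)) := fun _ _ hij =>
  (pairwise_disjoint_Ioc_two_pow_mul hs hij).preimage g

/-- The function `φ ∘ g` on `{s < g}`, and zero elsewhere. -/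
noncomputable def orliczExcess (φ : ℝ → ℝ) (s : ℝ) (g : α → ℝ) : α → ℝ≥0∞ :=
  {z | s < g z}.indicator fun z => ENNReal.ofReal (φ (g z))

lemma orliczExcess_le (φ : ℝ → ℝ) (s : ℝ) (g : α → ℝ) (z : α) :
    orliczExcess φ s g z ≤ ENNReal.ofReal (φ (g z)) :=
  indicator_le_self _ _ z

lemma orliczExcess_anti {φ : ℝ → ℝ} {g : α → ℝ} {s t : ℝ} (hst : s ≤ t) (z : α) :
    orliczExcess φ t g z ≤ orliczExcess φ s g z :=
  indicator_le_indicator_of_subset (fun _ hz => hst.trans_lt hz) (fun _ => zero_le) z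

variable [MeasurableSpace α] {g : α → ℝ} {s : ℝ}

lemma measurableSet_dyadicLayer (hg : Measurable g) (s : ℝ) (i : ℕ) :
    MeasurableSet (dyadicLayer g s i) :=
  hg measurableSet_Ioc

lemma lintegral_ofReal_le_tsum_dyadicLayer (κ : Measure α) (hg : Measurable g) (hs : 0 < s) :
    ∫⁻ z, ENNReal.ofReal (g z) ∂κ ≤ ENNReal.ofReal s * κ univ +
      ∑' i, ENNReal.ofReal (2 ^ (i + 1) * s) * κ (dyadicLayer g s i) := by
  have bound {t : ℝ} {A : Set α} (hA : MeasurableSet A) (ht : ∀ z ∈ A, g z ≤ t) :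
      ∫⁻ z in A, ENNReal.ofReal (g z) ∂κ ≤ ENNReal.ofReal t * κ A := by
    rw [← setLIntegral_const]
    exact setLIntegral_mono' hA fun z hz => ENNReal.ofReal_le_ofReal (ht z hz)
  have low := bound (measurableSet_le hg measurable_const) (t := s) fun _ => id
  have high : ∫⁻ z in {z | g z ≤ s}ᶜ, ENNReal.ofReal (g z) ∂κ ≤
      ∑' i, ENNReal.ofReal (2 ^ (i + 1) * s) * κ (dyadicLayer g s i) := by
    rw [show {z | g z ≤ s}ᶜ = {z | s < g z} by ext; simp, ← iUnion_dyadicLayer g hs,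
      lintegral_iUnion (measurableSet_dyadicLayer hg s) (pairwise_disjoint_dyadicLayer g hs.le)]
    exact ENNReal.tsum_le_tsum fun i =>
      bound (measurableSet_dyadicLayer hg s i) fun z hz => hz.2
  rw [← lintegral_add_compl _ (measurableSet_le hg (measurable_const (a := s)))]
  gcongr
  exact low.trans (by gcongr; exact subset_univ _)

lemma measurable_orliczExcess {φ : ℝ → ℝ} (hφ : NondecPos φ) (hs : 0 ≤ s) (hg : Measurable g) :
    Measurable (orliczExcess φ s g) := by
  have excess_monotone : Monotone ((Ioi s).indicator fun t => ENNReal.ofReal (φ t)) := by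
    intro a b hab
    by_cases ha : s < a
    · rw [indicator_of_mem (mem_Ioi.2 ha), indicator_of_mem (mem_Ioi.2 (ha.trans_le hab))]
      exact ENNReal.ofReal_le_ofReal (hφ.1 a b (hs.trans_lt ha) hab)
    · rw [indicator_of_notMem (notMem_Ioi.2 (not_lt.1 ha))]
      exact zero_le
  exact excess_monotone.measurable.comp hg

lemma tsum_dyadicLayer_le_lintegral_orliczExcess {φ : ℝ → ℝ} (hφ : NondecPos φ) (κ : Measure α)
    (hg : Measurable g) (hs : 0 < s) :
    ∑' i, ENNReal.ofReal (φ (2 ^ i * s)) * κ (dyadicLayer g s i) ≤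
      ∫⁻ z, orliczExcess φ s g z ∂κ := by
  rw [orliczExcess, lintegral_indicator (measurableSet_lt measurable_const hg),
    ← iUnion_dyadicLayer g hs,
    lintegral_iUnion (measurableSet_dyadicLayer hg s) (pairwise_disjoint_dyadicLayer g hs.le)]
  refine ENNReal.tsum_le_tsum fun i => ?_
  rw [← setLIntegral_const]
  exact setLIntegral_mono' (measurableSet_dyadicLayer hg s i) fun z hz =>
    ENNReal.ofReal_le_ofReal (hφ.1 _ _ (by positivity) hz.1.le)

end DyadicLayers

section CalderonSum

/-- The dyadic sum `∑ᵢ tᵢ (tᵢ / φ tᵢ)ᵉ`, `tᵢ = 2ⁱ s`, a discretization of the integral of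
`(t / φ t)ᵉ` over `(s, ∞)`. -/
noncomputable def calderonSum (φ : ℝ → ℝ) (e s : ℝ) : ℝ≥0∞ :=
  ∑' i : ℕ, ENNReal.ofReal (2 ^ i * s) *
    (ENNReal.ofReal (2 ^ i * s) / ENNReal.ofReal (φ (2 ^ i * s))) ^ e

variable {φ : ℝ → ℝ} {e : ℝ}

lemma setLIntegral_Ioi_div_rpow_ne_top (hφ : NondecPos φ) (he : 0 ≤ e) {t₀ : ℝ}
    (hint : IntegrableOn (fun t => (t / φ t) ^ e) (Ioi t₀)) {s : ℝ} (hs : 0 < s) :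
    ∫⁻ t in Ioi s, ENNReal.ofReal ((t / φ t) ^ e) ≠ ⊤ := by
  have near : ∫⁻ t in Ioc s t₀, ENNReal.ofReal ((t / φ t) ^ e) < ⊤ := by
    refine setLIntegral_lt_top_of_le_nnreal (by simp) ⟨((t₀ / φ s) ^ e).toNNReal, fun t ht => ?_⟩
    have t_pos : 0 < t := hs.trans ht.1
    have := hφ.2 s hs
    have := hφ.2 t t_pos
    have := hφ.1 s t hs ht.1.le
    have t_le := ht.2
    have := t_pos.trans_le t_le
    exact ENNReal.ofReal_le_ofReal (by gcongr)
  have cover : Ioi s ⊆ Ioc s t₀ ∪ Ioi t₀ := Ioi_subset_Ioc_union_Ioi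
  refine ((lintegral_mono_set cover).trans (lintegral_union_le _ _ _)).trans_lt ?_ |>.ne
  exact ENNReal.add_lt_top.2 ⟨near, hint.lintegral_lt_top⟩

lemma ofReal_mul_rpow_le_setLIntegral (hφ : NondecPos φ) (he : 0 ≤ e) {t : ℝ} (ht : 0 < t) :
    ENNReal.ofReal t * (ENNReal.ofReal t / ENNReal.ofReal (φ t)) ^ e ≤
      ENNReal.ofReal (2 * 2 ^ e) * ∫⁻ τ in Ioc (t / 2) t, ENNReal.ofReal ((τ / φ τ) ^ e) := by
  have φ_pos := hφ.2 t ht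
  have lower : ENNReal.ofReal ((t / 2 / φ t) ^ e * (t / 2)) ≤
      ∫⁻ τ in Ioc (t / 2) t, ENNReal.ofReal ((τ / φ τ) ^ e) :=
    calc ENNReal.ofReal ((t / 2 / φ t) ^ e * (t / 2))
        = ∫⁻ _ in Ioc (t / 2) t, ENNReal.ofReal ((t / 2 / φ t) ^ e) := by
          rw [setLIntegral_const, Real.volume_Ioc, sub_half, ENNReal.ofReal_mul (by positivity)]
      _ ≤ ∫⁻ τ in Ioc (t / 2) t, ENNReal.ofReal ((τ / φ τ) ^ e) := by
          refine setLIntegral_mono' measurableSet_Ioc fun τ hτ => ENNReal.ofReal_le_ofReal ?_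
          have τ_pos : 0 < τ := (half_pos ht).trans hτ.1
          have := hφ.2 τ τ_pos
          have := hφ.1 τ t τ_pos hτ.2
          have := hτ.1.le
          gcongr
  calc ENNReal.ofReal t * (ENNReal.ofReal t / ENNReal.ofReal (φ t)) ^ e
      = ENNReal.ofReal (2 * 2 ^ e) * ENNReal.ofReal ((t / 2 / φ t) ^ e * (t / 2)) := by
        rw [← ENNReal.ofReal_div_of_pos φ_pos, ENNReal.ofReal_rpow_of_pos (by positivity),
          ← ENNReal.ofReal_mul (by positivity), ← ENNReal.ofReal_mul (by positivity),
          div_right_comm t 2, Real.div_rpow (by positivity) zero_le_two]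
        field_simp
    _ ≤ _ := by gcongr

lemma calderonSum_ne_top (hφ : NondecPos φ) (he : 0 ≤ e) {t₀ : ℝ}
    (hint : IntegrableOn (fun t => (t / φ t) ^ e) (Ioi t₀)) {s : ℝ} (hs : 0 < s) :
    calderonSum φ e s ≠ ⊤ := by
  have term_le (i : ℕ) := ofReal_mul_rpow_le_setLIntegral hφ he (t := 2 ^ i * s) (by positivity)
  refine ne_top_of_le_ne_top ?_ (ENNReal.tsum_le_tsum term_le)
  have half_eq (i : ℕ) : Ioc (2 ^ i * s / 2) (2 ^ i * s) =
      Ioc (2 ^ i * (s / 2)) (2 ^ (i + 1) * (s / 2)) := by congr 1 <;> ring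
  simp only [half_eq]
  rw [ENNReal.tsum_mul_left, ← lintegral_iUnion (fun _ => measurableSet_Ioc)
    (pairwise_disjoint_Ioc_two_pow_mul (half_pos hs).le),
    iUnion_Ioc_two_pow_mul (half_pos hs)]
  exact ENNReal.mul_ne_top ENNReal.ofReal_ne_top
    (setLIntegral_Ioi_div_rpow_ne_top hφ he hint (half_pos hs))

end CalderonSum

section Oscillation

lemma rpow_tsum_mul_rpow_le {ι : Type*} {p : ℝ} (hp : 1 < p) (P a : ι → ℝ≥0∞) {w : ι → ℝ≥0∞}
    (w_ne_zero : ∀ i, w i ≠ 0) (w_ne_top : ∀ i, w i ≠ ⊤) :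
    (∑' i, P i * a i ^ (1 / p)) ^ p ≤
      (∑' i, P i * (P i / w i) ^ (1 / (p - 1))) ^ (p - 1) * ∑' i, w i * a i := by
  have p_pos : 0 < p := one_pos.trans hp
  have p_sub_pos : 0 < p - 1 := sub_pos.2 hp
  let _ : MeasurableSpace ι := ⊤
  have holder := ENNReal.lintegral_mul_le_Lp_mul_Lq Measure.count (.conjExponent hp)
    (f := fun i => (w i * a i) ^ (1 / p)) (g := fun i => P i / w i ^ (1 / p))
    measurable_from_top.aemeasurable measurable_from_top.aemeasurable
  have mul_eq (i : ι) : (w i * a i) ^ (1 / p) * (P i / w i ^ (1 / p)) = P i * a i ^ (1 / p) := by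
    rw [ENNReal.mul_rpow_of_nonneg _ _ (by positivity), mul_right_comm, ENNReal.mul_div_cancel
      (by simp [w_ne_zero, w_ne_top]) (ENNReal.rpow_ne_top_of_nonneg (by positivity) (w_ne_top i))]
  have left_eq (i : ι) : ((w i * a i) ^ (1 / p)) ^ p = w i * a i := by
    rw [← ENNReal.rpow_mul, one_div_mul_cancel p_pos.ne', ENNReal.rpow_one]
  have right_eq (i : ι) : (P i / w i ^ (1 / p)) ^ p.conjExponent =
      P i * (P i / w i) ^ (1 / (p - 1)) := by
    have exponent_eq : p.conjExponent = 1 + 1 / (p - 1) := by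
      rw [Real.conjExponent]; field_simp; ring
    rw [ENNReal.div_rpow_of_nonneg _ _ (by rw [exponent_eq]; positivity), ← ENNReal.rpow_mul,
      show 1 / p * p.conjExponent = 1 / (p - 1) by rw [Real.conjExponent]; field_simp, exponent_eq,
      ENNReal.rpow_add_of_nonneg _ _ zero_le_one (by positivity), ENNReal.rpow_one,
      ENNReal.div_rpow_of_nonneg _ _ (by positivity), mul_div_assoc]
  simp only [lintegral_count, Pi.mul_apply, mul_eq, left_eq, right_eq] at holder
  refine (ENNReal.rpow_le_rpow holder p_pos.le).trans_eq ?_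
  rw [ENNReal.mul_rpow_of_nonneg _ _ p_pos.le, ← ENNReal.rpow_mul, ← ENNReal.rpow_mul,
    one_div_mul_cancel p_pos.ne', ENNReal.rpow_one, mul_comm,
    show 1 / p.conjExponent * p = p - 1 by rw [Real.conjExponent]; field_simp]

lemma rpow_tsum_dyadicLayer_le {α : Type*} [MeasurableSpace α] (κ : Measure α) {φ : ℝ → ℝ}
    (hφ : NondecPos φ) {g : α → ℝ} (hg : Measurable g) {p s : ℝ} (hp : 1 < p) (hs : 0 < s) :
    (∑' i, ENNReal.ofReal (2 ^ i * s) * κ (dyadicLayer g s i) ^ (1 / p)) ^ p ≤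
      calderonSum φ (1 / (p - 1)) s ^ (p - 1) * ∫⁻ z, orliczExcess φ s g z ∂κ := by
  refine (rpow_tsum_mul_rpow_le hp (fun i : ℕ => ENNReal.ofReal (2 ^ i * s))
    (fun i => κ (dyadicLayer g s i)) (w := fun i => ENNReal.ofReal (φ (2 ^ i * s)))
    (fun i => ?_) (fun i => ENNReal.ofReal_ne_top)).trans ?_
  · exact (ENNReal.ofReal_pos.2 (hφ.2 _ (by positivity))).ne'
  · exact mul_le_mul_right (tsum_dyadicLayer_le_lintegral_orliczExcess hφ κ hg hs) _

/-- The density controlling the `p`-th power of the oscillation of a function with gradient `g`,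
see `ediam_image_rpow_le`. The truncation level `s` is a free parameter. -/
noncomputable def oscDensity {α : Type*} (φ : ℝ → ℝ) (p s : ℝ) (g : α → ℝ) (z : α) : ℝ≥0∞ :=
  2 ^ (p - 1) * (ENNReal.ofReal s ^ p +
    4 ^ p * calderonSum φ (1 / (p - 1)) s ^ (p - 1) * orliczExcess φ s g z)

variable {F : Type*} [NormedAddCommGroup F] [NormedSpace ℝ F] [MeasurableSpace F]

/-- `g` is an upper gradient of `h` along almost all segments with both endpoints in `W`. Negative
values of `g` are read as zero. -/
def IsUpperGradientAEOn {Y : Type*} [PseudoEMetricSpace Y] (ν : Measure F) (W : Set F) (h : F → Y)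
    (g : F → ℝ) : Prop :=
  ∀ᵐ x ∂ν, ∀ᵐ y ∂ν, x ∈ W → y ∈ W →
    edist (h x) (h y) ≤ ‖y - x‖ₑ * segmentAvg (fun z => ENNReal.ofReal (g z)) x (y - x)

lemma IsUpperGradientAEOn.mono {Y : Type*} [PseudoEMetricSpace Y] {ν : Measure F} {V W : Set F}
    {h : F → Y} {g : F → ℝ} (hgrad : IsUpperGradientAEOn ν W h g) (hV : V ⊆ W) :
    IsUpperGradientAEOn ν V h g := by
  filter_upwards [hgrad] with x hx
  filter_upwards [hx] with y hy hxV hyV using hy (hV hxV) (hV hyV)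

variable [FiniteDimensional ℝ F] [BorelSpace F] {ν : Measure F} [ν.IsAddHaarMeasure] {B : Set F}

lemma setLAverage_segmentAvg_le (hk : 2 ≤ Module.finrank ℝ F) (hB : Convex ℝ B)
    (B_ne_zero : ν B ≠ 0) (B_ne_top : ν B ≠ ⊤) {x : F} (hx : x ∈ B) {g : F → ℝ}
    (hg : Measurable g) {s : ℝ} (hs : 0 < s) :
    ⨍⁻ y in B, segmentAvg (fun z => ENNReal.ofReal (g z)) x (y - x) ∂ν ≤ ENNReal.ofReal s +
      4 * ∑' i, ENNReal.ofReal (2 ^ i * s) *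
        ((ν B)⁻¹ • ν.restrict B) (dyadicLayer g s i) ^ (1 / Module.finrank ℝ F : ℝ) := by
  rw [setLAverage_eq, ← lintegral_segmentMeasure ν B x hg.ennreal_ofReal]
  refine ENNReal.div_le_of_le_mul ?_
  refine (lintegral_ofReal_le_tsum_dyadicLayer (segmentMeasure ν B x) hg hs).trans ?_
  rw [segmentMeasure_univ, add_mul, ← ENNReal.tsum_mul_left, ← ENNReal.tsum_mul_right]
  refine add_le_add le_rfl (ENNReal.tsum_le_tsum fun i => ?_)
  rw [Measure.smul_apply, Measure.restrict_apply (measurableSet_dyadicLayer hg s i), smul_eq_mul,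
    ← ENNReal.div_eq_inv_mul]
  calc ENNReal.ofReal (2 ^ (i + 1) * s) * segmentMeasure ν B x (dyadicLayer g s i)
      ≤ ENNReal.ofReal (2 * (2 ^ i * s)) * (2 * ν B *
          (ν (dyadicLayer g s i ∩ B) / ν B) ^ (1 / Module.finrank ℝ F : ℝ)) := by
        rw [pow_succ', mul_assoc]
        gcongr
        exact segmentMeasure_le ν hk hB B_ne_zero B_ne_top hx (measurableSet_dyadicLayer hg s i)
    _ = _ := by
        rw [ENNReal.ofReal_mul zero_le_two, ENNReal.ofReal_ofNat]
        ring

lemma setLAverage_segmentAvg_rpow_le {φ : ℝ → ℝ} (hφ : NondecPos φ)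
    (hk : 2 ≤ Module.finrank ℝ F) (hB : Convex ℝ B)
    (B_ne_zero : ν B ≠ 0) (B_ne_top : ν B ≠ ⊤) {x : F} (hx : x ∈ B) {g : F → ℝ}
    (hg : Measurable g) {s : ℝ} (hs : 0 < s) :
    (⨍⁻ y in B, segmentAvg (fun z => ENNReal.ofReal (g z)) x (y - x) ∂ν) ^
      (Module.finrank ℝ F : ℝ) ≤ ⨍⁻ y in B, oscDensity φ (Module.finrank ℝ F) s g y ∂ν := by
  set p := (Module.finrank ℝ F : ℝ)
  have hp : 1 < p := by simp only [p]; exact_mod_cast hk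
  set κ : Measure F := (ν B)⁻¹ • ν.restrict B with κ_def
  have κ_univ : κ univ = 1 := by simp [κ_def, ENNReal.inv_mul_cancel B_ne_zero B_ne_top]
  rw [setLAverage_eq' _ (oscDensity φ p s g)]
  set Z := ∑' i, ENNReal.ofReal (2 ^ i * s) * κ (dyadicLayer g s i) ^ (1 / p)
  set C := calderonSum φ (1 / (p - 1)) s
  calc (⨍⁻ y in B, segmentAvg (fun z => ENNReal.ofReal (g z)) x (y - x) ∂ν) ^ p
      ≤ (ENNReal.ofReal s + 4 * Z) ^ p := by
        gcongr
        exact setLAverage_segmentAvg_le hk hB B_ne_zero B_ne_top hx hg hs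
    _ ≤ 2 ^ (p - 1) * (ENNReal.ofReal s ^ p + (4 * Z) ^ p) :=
        ENNReal.rpow_add_le_mul_rpow_add_rpow _ _ hp.le
    _ ≤ 2 ^ (p - 1) * (ENNReal.ofReal s ^ p +
          4 ^ p * C ^ (p - 1) * ∫⁻ z, orliczExcess φ s g z ∂κ) := by
        rw [ENNReal.mul_rpow_of_nonneg _ _ (by positivity), mul_assoc]
        gcongr
        exact rpow_tsum_dyadicLayer_le κ hφ hg hp hs
    _ ≤ ∫⁻ z, oscDensity φ p s g z ∂κ := by
        refine le_trans ?_ (lintegral_const_mul_le _ _)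
        gcongr
        rw [lintegral_add_left measurable_const, lintegral_const, κ_univ, mul_one]
        gcongr
        exact lintegral_const_mul_le _ _

lemma ediam_image_le_of_setLAverage_edist_le {X Y : Type*} [TopologicalSpace X]
    [MeasurableSpace X] [OpensMeasurableSpace X] {μ : Measure X} [μ.IsOpenPosMeasure]
    [PseudoEMetricSpace Y] {h : X → Y} {B : Set X} (hB : MeasurableSet B)
    (hB_int : B ⊆ closure (interior B)) (B_ne_zero : μ B ≠ 0) (B_ne_top : μ B ≠ ⊤)
    (hh : ContinuousOn h B) {M : ℝ≥0∞}
    (hM : ∀ᵐ x ∂μ, x ∈ B → ⨍⁻ y in B, edist (h x) (h y) ∂μ ≤ M) :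
    ediam (h '' B) ≤ 2 * M := by
  set G : Set X := {x | x ∈ B → ⨍⁻ y in B, edist (h x) (h y) ∂μ ≤ M}
  have B_subset : B ⊆ closure (interior B ∩ G) := hB_int.trans <| closure_minimal
    ((Measure.dense_of_ae hM).open_subset_closure_inter isOpen_interior) isClosed_closure
  have image_subset : h '' B ⊆ closure (h '' (interior B ∩ G)) := by
    rintro _ ⟨x, hx, rfl⟩
    exact ((hh x hx).mono (inter_subset_left.trans interior_subset)).mem_closure_image (B_subset hx)
  refine (Metric.ediam_mono image_subset).trans ?_
  rw [Metric.ediam_closure]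
  refine Metric.ediam_le ?_
  rintro _ ⟨x, ⟨hxB, hxG⟩, rfl⟩ _ ⟨x', ⟨hxB', hxG'⟩, rfl⟩
  have hmeas : AEMeasurable (fun y => edist (h x) (h y)) (μ.restrict B) :=
    ContinuousOn.aemeasurable (by fun_prop) hB
  calc edist (h x) (h x')
      = ⨍⁻ _ in B, edist (h x) (h x') ∂μ := (setLAverage_const B_ne_zero B_ne_top _).symm
    _ ≤ ⨍⁻ y in B, (edist (h x) (h y) + edist (h x') (h y)) ∂μ :=
        lintegral_mono fun y => edist_triangle_right _ _ _
    _ = ⨍⁻ y in B, edist (h x) (h y) ∂μ + ⨍⁻ y in B, edist (h x') (h y) ∂μ :=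
        lintegral_add_left' (hmeas.smul_measure _) _
    _ ≤ M + M := add_le_add (hxG (interior_subset hxB)) (hxG' (interior_subset hxB'))
    _ = 2 * M := (two_mul M).symm

lemma ediam_image_rpow_le {Y : Type*} [PseudoEMetricSpace Y] {φ : ℝ → ℝ} (hφ : NondecPos φ)
    (hk : 2 ≤ Module.finrank ℝ F) (hB : Convex ℝ B) (hB_meas : MeasurableSet B)
    (hB_int : (interior B).Nonempty) (B_ne_top : ν B ≠ ⊤) {h : F → Y} (hh : ContinuousOn h B)
    {g : F → ℝ} (hg : Measurable g) (hgrad : IsUpperGradientAEOn ν B h g)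
    {s : ℝ} (hs : 0 < s) :
    ediam (h '' B) ^ (Module.finrank ℝ F : ℝ) ≤ (2 * ediam B) ^ (Module.finrank ℝ F : ℝ) *
      ⨍⁻ y in B, oscDensity φ (Module.finrank ℝ F) s g y ∂ν := by
  set p := (Module.finrank ℝ F : ℝ)
  have p_pos : 0 < p := by simp only [p]; positivity
  set D := ⨍⁻ y in B, oscDensity φ p s g y ∂ν
  have B_ne_zero : ν B ≠ 0 := (Measure.measure_pos_of_nonempty_interior ν hB_int).ne'
  have average_le : ∀ᵐ x ∂ν, x ∈ B →
      ⨍⁻ y in B, edist (h x) (h y) ∂ν ≤ ediam B * D ^ p⁻¹ := by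
    filter_upwards [hgrad] with x hx hxB
    calc ⨍⁻ y in B, edist (h x) (h y) ∂ν
        ≤ ⨍⁻ y in B, ediam B * segmentAvg (fun z => ENNReal.ofReal (g z)) x (y - x) ∂ν := by
          refine laverage_mono_ae ?_
          filter_upwards [ae_restrict_of_ae hx, ae_restrict_mem hB_meas] with y hy hyB
          refine (hy hxB hyB).trans ?_
          gcongr
          rw [← edist_eq_enorm_sub]
          exact Metric.edist_le_ediam_of_mem hyB hxB
      _ = ediam B * ⨍⁻ y in B, segmentAvg (fun z => ENNReal.ofReal (g z)) x (y - x) ∂ν :=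
          lintegral_const_mul _ ((measurable_segmentAvg hg.ennreal_ofReal).comp
            (measurable_const.prodMk (measurable_id.sub_const x)))
      _ ≤ ediam B * D ^ p⁻¹ := by
          gcongr
          exact (ENNReal.le_rpow_inv_iff p_pos).2
            (setLAverage_segmentAvg_rpow_le hφ hk hB B_ne_zero B_ne_top hxB hg hs)
  have hB_closure : B ⊆ closure (interior B) := by
    rw [hB.closure_interior_eq_closure_of_nonempty_interior hB_int]
    exact subset_closure
  have ediam_le := ediam_image_le_of_setLAverage_edist_le hB_meas hB_closure B_ne_zero B_ne_top hh
    average_le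
  calc ediam (h '' B) ^ p ≤ (2 * ediam B * D ^ p⁻¹) ^ p := by
        rw [mul_assoc]; gcongr
    _ = (2 * ediam B) ^ p * D := by
        rw [ENNReal.mul_rpow_of_nonneg _ _ p_pos.le, ENNReal.rpow_inv_rpow p_pos.ne']

lemma ediam_image_closedBall_rpow_le {Y : Type*} [PseudoEMetricSpace Y] {φ : ℝ → ℝ}
    (hφ : NondecPos φ) (hk : 2 ≤ Module.finrank ℝ F) {c : F} {r : ℝ} (hr : 0 < r) {h : F → Y}
    (hh : ContinuousOn h (closedBall c r)) {g : F → ℝ} (hg : Measurable g)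
    (hgrad : IsUpperGradientAEOn ν (closedBall c r) h g) {s : ℝ} (hs : 0 < s) :
    ediam (h '' closedBall c r) ^ (Module.finrank ℝ F : ℝ) ≤
      4 ^ (Module.finrank ℝ F : ℝ) / ν (ball 0 1) *
        ∫⁻ y in closedBall c r, oscDensity φ (Module.finrank ℝ F) s g y ∂ν := by
  have unit_ne_zero : ν (ball (0 : F) 1) ≠ 0 := (measure_ball_pos ν _ one_pos).ne'
  have unit_ne_top : ν (ball (0 : F) 1) ≠ ⊤ := measure_ball_lt_top.ne
  have int_nonempty : (interior (closedBall c r)).Nonempty :=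
    ⟨c, ball_subset_interior_closedBall (mem_ball_self hr)⟩
  refine (ediam_image_rpow_le hφ hk (convex_closedBall c r) measurableSet_closedBall int_nonempty
    measure_closedBall_lt_top.ne hh hg hgrad hs).trans ?_
  have radius_ne_zero : ENNReal.ofReal r ^ Module.finrank ℝ F ≠ 0 := by simp [hr]
  rw [setLAverage_eq, Measure.addHaar_closedBall ν c hr.le, ENNReal.ofReal_pow hr.le]
  calc (2 * ediam (closedBall c r)) ^ (Module.finrank ℝ F : ℝ) *
        ((∫⁻ y in closedBall c r, oscDensity φ (Module.finrank ℝ F) s g y ∂ν) /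
          (ENNReal.ofReal r ^ Module.finrank ℝ F * ν (ball 0 1)))
      ≤ (4 * ENNReal.ofReal r) ^ Module.finrank ℝ F *
        ((∫⁻ y in closedBall c r, oscDensity φ (Module.finrank ℝ F) s g y ∂ν) /
          (ENNReal.ofReal r ^ Module.finrank ℝ F * ν (ball 0 1))) := by
        rw [ENNReal.rpow_natCast, show (4 : ℝ≥0∞) = 2 * 2 by norm_num, mul_assoc 2]
        gcongr
        rw [← Metric.closedEBall_ofReal hr.le]
        exact Metric.ediam_closedEBall_le
    _ = _ := by
        rw [ENNReal.rpow_natCast, mul_pow, div_eq_mul_inv, div_eq_mul_inv,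
          ENNReal.mul_inv (.inr unit_ne_top) (.inr unit_ne_zero)]
        rw [show ∀ a b c d e : ℝ≥0∞, a * b * (c * (d * e)) = a * e * c * (b * d) by intros; ring,
          ENNReal.mul_inv_cancel radius_ne_zero (by simp), mul_one]

end Oscillation

section Hausdorff

lemma eventually_ediam_image_closedBall_le {X Y : Type*} [PseudoMetricSpace X]
    [PseudoEMetricSpace Y] {h : X → Y} {x : X} (hh : ContinuousAt h x) {η : ℝ≥0∞} (hη : η ≠ 0) :
    ∀ᶠ r in 𝓝[>] (0 : ℝ), ediam (h '' closedBall x r) ≤ η := by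
  have preimage_mem : h ⁻¹' eball (h x) (η / 2) ∈ 𝓝 x :=
    hh (Metric.eball_mem_nhds _ (ENNReal.half_pos hη))
  filter_upwards [nhdsWithin_le_nhds (eventually_closedBall_subset preimage_mem)] with r hr
  calc ediam (h '' closedBall x r) ≤ ediam (eball (h x) (η / 2)) :=
        Metric.ediam_mono (image_subset_iff.2 hr)
    _ ≤ 2 * (η / 2) := Metric.ediam_eball_le
    _ = η := ENNReal.mul_div_cancel two_ne_zero ENNReal.ofNat_ne_top

lemma hausdorffMeasure_image_le_of_ediam_closedBall_rpow_le {X Y : Type*} [MetricSpace X]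
    [SecondCountableTopology X] [HasBesicovitchCovering X] [MeasurableSpace X] [BorelSpace X]
    [EMetricSpace Y] [MeasurableSpace Y] [BorelSpace Y] {d : ℝ} (μ : Measure X)
    [IsFiniteMeasure μ] {W : Set X} (hW : IsOpen W) {h : X → Y} (hh : ContinuousOn h W)
    (hball : ∀ x r, 0 < r → closedBall x r ⊆ W →
      ediam (h '' closedBall x r) ^ d ≤ μ (closedBall x r)) {A : Set X} (hA : A ⊆ W) :
    (μH[d] : Measure Y) (h '' A) ≤ μ A := by
  refine ENNReal.le_of_forall_pos_le_add fun ε hε _ => ?_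
  let η (j : ℕ) : ℝ≥0∞ := ((j + 1 : ℕ) : ℝ≥0∞)⁻¹
  have η_tendsto : Tendsto η atTop (𝓝 0) :=
    (tendsto_add_atTop_iff_nat 1).2 ENNReal.tendsto_inv_nat_nhds_zero
  have η_ne_zero (j : ℕ) : η j ≠ 0 := ENNReal.inv_ne_zero.2 (ENNReal.natCast_ne_top _)
  have exists_covering (j : ℕ) := Besicovitch.exists_closedBall_covering_tsum_measure_le μ
    (ENNReal.coe_ne_zero.2 hε.ne')
    (fun x => {r | 0 < r ∧ closedBall x r ⊆ W ∧ ediam (h '' closedBall x r) ≤ η j}) A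
    fun x hx δ hδ => by
      have hxW := hW.mem_nhds (hA hx)
      have subset_W : ∀ᶠ r in 𝓝[>] (0 : ℝ), closedBall x r ⊆ W :=
        nhdsWithin_le_nhds (eventually_closedBall_subset hxW)
      obtain ⟨r, hrW, hr, hrδ⟩ := (subset_W.and
        ((eventually_ediam_image_closedBall_le (hh.continuousAt hxW) (η_ne_zero j)).and
          (Ioo_mem_nhdsGT hδ))).exists
      exact ⟨r, ⟨hrδ.1, hrW, hr⟩, hrδ⟩
  choose t r t_countable _ hr A_subset tsum_le using exists_covering
  have (j : ℕ) : Countable (t j) := (t_countable j).to_subtype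
  refine (Measure.hausdorffMeasure_le_liminf_tsum d (h '' A) (l := atTop) η η_tendsto
    (fun j (x : t j) => h '' closedBall (x : X) (r j x))
    (.of_forall fun j x => (hr j x x.2).2.2) (.of_forall fun j => ?_)).trans ?_
  · rw [← image_iUnion, iUnion_coe_set]
    exact image_mono (A_subset j)
  · refine liminf_le_of_frequently_le' (Eventually.frequently (.of_forall fun j => ?_))
    refine le_trans (ENNReal.tsum_le_tsum fun x => ?_) (tsum_le j)
    exact hball _ _ (hr j x x.2).1 (hr j x x.2).2.1

/-- Absolute continuity of the set function `A ↦ τ (h '' A)` with respect to `μ` on subsets of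
`S`. -/
def AbsContOn {X Y : Type*} [MeasurableSpace X] [MeasurableSpace Y] (μ : Measure X)
    (τ : Measure Y) (h : X → Y) (S : Set X) : Prop :=
  ∀ ε : ℝ, 0 < ε → ∃ δ : ℝ, 0 < δ ∧ ∀ A : Set X, A ⊆ S →
    μ A < ENNReal.ofReal δ → τ (h '' A) < ENNReal.ofReal ε

section AbsContOn

variable {X Y : Type*} [MeasurableSpace X] [MeasurableSpace Y] {μ : Measure X} {τ : Measure Y}
  {h : X → Y} {S : Set X}

lemma AbsContOn.measure_image_eq_zero (hac : AbsContOn μ τ h S) {A : Set X} (hA : A ⊆ S)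
    (hμA : μ A = 0) : τ (h '' A) = 0 := by
  refine nonpos_iff_eq_zero.1 (ENNReal.le_of_forall_pos_le_add fun ε hε _ => ?_)
  obtain ⟨δ, hδ, hlt⟩ := hac ε hε
  rw [zero_add, ← ENNReal.ofReal_coe_nnreal]
  exact (hlt A hA (by simpa [hμA] using hδ)).le

lemma AbsContOn.mono (hac : AbsContOn μ τ h S) {S' : Set X} (hS' : S' ⊆ S) :
    AbsContOn μ τ h S' := fun ε hε =>
  (hac ε hε).imp fun _ ⟨hδ, hlt⟩ => ⟨hδ, fun A hA => hlt A (hA.trans hS')⟩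

lemma absContOn_of_image_le_setLIntegral {ρ : X → ℝ≥0∞} (hρ : ∫⁻ x in S, ρ x ∂μ ≠ ⊤)
    (hle : ∀ A ⊆ S, τ (h '' A) ≤ ∫⁻ x in A, ρ x ∂μ.restrict S) : AbsContOn μ τ h S := by
  intro ε hε
  obtain ⟨δ, hδ, hlt⟩ := exists_pos_setLIntegral_lt_of_measure_lt hρ (ENNReal.ofReal_pos.2 hε).ne'
  obtain ⟨η, hη, hηδ⟩ := ENNReal.lt_iff_exists_nnreal_btwn.1 hδ
  refine ⟨η, by exact_mod_cast hη, fun A hA hAη => (hle A hA).trans_lt (hlt A ?_)⟩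
  rw [ENNReal.ofReal_coe_nnreal] at hAη
  exact (Measure.restrict_apply_le _ _).trans_lt (hAη.trans hηδ)

end AbsContOn

lemma setLIntegral_oscDensity_ne_top {α : Type*} [MeasurableSpace α] {μ : Measure α}
    {φ : ℝ → ℝ} (hφ : NondecPos φ) {p : ℝ} (hp : 1 ≤ p) {t₀ : ℝ}
    (hint : IntegrableOn (fun t => (t / φ t) ^ (1 / (p - 1))) (Ioi t₀)) {W : Set α} (hW : μ W ≠ ⊤)
    {g : α → ℝ} (hgφ : ∫⁻ y in W, orliczExcess φ 0 g y ∂μ ≠ ⊤) {s : ℝ} (hs : 0 < s) :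
    ∫⁻ y in W, oscDensity φ p s g y ∂μ ≠ ⊤ := by
  have hp' : 0 ≤ p - 1 := sub_nonneg.2 hp
  have calderon_ne_top : calderonSum φ (1 / (p - 1)) s ^ (p - 1) ≠ ⊤ :=
    ENNReal.rpow_ne_top_of_nonneg hp' (calderonSum_ne_top hφ (by positivity) hint hs)
  have four_ne_top : (4 : ℝ≥0∞) ^ p ≠ ⊤ := ENNReal.rpow_ne_top_of_nonneg (by linarith) (by simp)
  have two_ne_top : (2 : ℝ≥0∞) ^ (p - 1) ≠ ⊤ := ENNReal.rpow_ne_top_of_nonneg hp' (by simp)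
  simp only [oscDensity]
  rw [lintegral_const_mul' _ _ two_ne_top, lintegral_add_left measurable_const,
    lintegral_const_mul' _ _ (ENNReal.mul_ne_top four_ne_top calderon_ne_top), setLIntegral_const]
  refine ENNReal.mul_ne_top two_ne_top (ENNReal.add_ne_top.2 ⟨?_, ?_⟩)
  · exact ENNReal.mul_ne_top (ENNReal.rpow_ne_top_of_nonneg (by linarith) ENNReal.ofReal_ne_top) hW
  · exact ENNReal.mul_ne_top (ENNReal.mul_ne_top four_ne_top calderon_ne_top)
      (ne_top_of_le_ne_top hgφ (lintegral_mono (orliczExcess_anti hs.le)))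

variable {F : Type*} [NormedAddCommGroup F] [NormedSpace ℝ F] [MeasurableSpace F]

lemma four_rpow_div_measure_ball_ne_top (ν : Measure F) [ν.IsOpenPosMeasure] :
    4 ^ (Module.finrank ℝ F : ℝ) / ν (ball (0 : F) 1) ≠ ⊤ :=
  ENNReal.div_ne_top (ENNReal.rpow_ne_top_of_nonneg (by positivity) (by simp))
    (measure_ball_pos ν _ one_pos).ne'

lemma setLIntegral_const_mul_oscDensity_ne_top {ν : Measure F} [ν.IsOpenPosMeasure]
    {φ : ℝ → ℝ} (hφ : NondecPos φ) (hk : 2 ≤ Module.finrank ℝ F) {t₀ : ℝ}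
    (hint : IntegrableOn (fun t => (t / φ t) ^ (1 / ((Module.finrank ℝ F : ℝ) - 1))) (Ioi t₀))
    {W : Set F} (hW : ν W ≠ ⊤) {g : F → ℝ}
    (hgφ : ∫⁻ y in W, orliczExcess φ 0 g y ∂ν ≠ ⊤) {s : ℝ} (hs : 0 < s) :
    ∫⁻ y in W, 4 ^ (Module.finrank ℝ F : ℝ) / ν (ball 0 1) *
      oscDensity φ (Module.finrank ℝ F) s g y ∂ν ≠ ⊤ := by
  have one_le : (1 : ℝ) ≤ Module.finrank ℝ F := by exact_mod_cast one_le_two.trans hk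
  rw [lintegral_const_mul' _ _ (four_rpow_div_measure_ball_ne_top ν)]
  exact ENNReal.mul_ne_top (four_rpow_div_measure_ball_ne_top ν)
    (setLIntegral_oscDensity_ne_top hφ one_le hint hW hgφ hs)

variable [FiniteDimensional ℝ F] [BorelSpace F] {ν : Measure F} [ν.IsAddHaarMeasure]
  {Y : Type*} [EMetricSpace Y] [MeasurableSpace Y] [BorelSpace Y] {φ : ℝ → ℝ} {t₀ s : ℝ} {W : Set F}
  {h : F → Y} {g : F → ℝ}

section Slice

variable (hφ : NondecPos φ) (hk : 2 ≤ Module.finrank ℝ F)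
  (hint : IntegrableOn (fun t => (t / φ t) ^ (1 / ((Module.finrank ℝ F : ℝ) - 1))) (Ioi t₀))
  (hW : IsOpen W) (hW_ne_top : ν W ≠ ⊤) (hh : ContinuousOn h W) (hg : Measurable g)
  (hgφ : ∫⁻ y in W, orliczExcess φ 0 g y ∂ν ≠ ⊤) (hgrad : IsUpperGradientAEOn ν W h g)

include hφ hk hint hW hW_ne_top hh hg hgφ hgrad

lemma hausdorffMeasure_image_le_setLIntegral (hs : 0 < s) {A : Set F} (hA : A ⊆ W) :
    (μH[Module.finrank ℝ F] : Measure Y) (h '' A) ≤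
      ∫⁻ y in A, 4 ^ (Module.finrank ℝ F : ℝ) / ν (ball 0 1) *
        oscDensity φ (Module.finrank ℝ F) s g y ∂ν.restrict W := by
  have := isFiniteMeasure_withDensity
    (setLIntegral_const_mul_oscDensity_ne_top hφ hk hint hW_ne_top hgφ hs)
  rw [← withDensity_apply']
  refine hausdorffMeasure_image_le_of_ediam_closedBall_rpow_le _ hW hh (fun c r hr hsub => ?_) hA
  rw [withDensity_apply', Measure.restrict_restrict' hW.measurableSet, inter_eq_left.2 hsub,
    lintegral_const_mul' _ _ (four_rpow_div_measure_ball_ne_top ν)]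
  exact ediam_image_closedBall_rpow_le hφ hk hr (hh.mono hsub) hg (hgrad.mono hsub) hs

lemma absContOn_of_isUpperGradientAEOn : AbsContOn ν (μH[Module.finrank ℝ F] : Measure Y) h W :=
  absContOn_of_image_le_setLIntegral
    (setLIntegral_const_mul_oscDensity_ne_top hφ hk hint hW_ne_top hgφ one_pos)
    fun _ => hausdorffMeasure_image_le_setLIntegral
      hφ hk hint hW hW_ne_top hh hg hgφ hgrad one_pos

lemma hausdorffMeasure_image_eq_zero_of_nonpos {A : Set F} (hA : A ⊆ W) (hgA : ∀ y ∈ A, g y ≤ 0) :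
    (μH[Module.finrank ℝ F] : Measure Y) (h '' A) = 0 := by
  set p := (Module.finrank ℝ F : ℝ)
  have p_pos : 0 < p := by simp only [p]; positivity
  set C : ℝ≥0∞ := 4 ^ p / ν (ball 0 1) * 2 ^ (p - 1) * ν W
  have bound {s : ℝ} (hs : 0 < s) : (μH[p] : Measure Y) (h '' A) ≤ C * ENNReal.ofReal s ^ p := by
    calc (μH[p] : Measure Y) (h '' A)
        ≤ ∫⁻ y in A, 4 ^ p / ν (ball 0 1) * oscDensity φ p s g y ∂ν.restrict W :=
          hausdorffMeasure_image_le_setLIntegral hφ hk hint hW hW_ne_top hh hg hgφ hgrad hs hA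
      _ ≤ ∫⁻ y in {z | g z ≤ 0}, 4 ^ p / ν (ball 0 1) * oscDensity φ p s g y ∂ν.restrict W :=
          lintegral_mono_set hgA
      _ = ∫⁻ _ in {z | g z ≤ 0}, 4 ^ p / ν (ball 0 1) * (2 ^ (p - 1) * ENNReal.ofReal s ^ p)
            ∂ν.restrict W := by
          refine setLIntegral_congr_fun (measurableSet_le hg measurable_const) fun y hy => ?_
          have hy_notMem : y ∉ {z | s < g z} := not_lt.2 (hy.out.trans hs.le)
          simp only [oscDensity, orliczExcess, indicator_of_notMem hy_notMem, mul_zero, add_zero]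
      _ ≤ ∫⁻ _ in W, 4 ^ p / ν (ball 0 1) * (2 ^ (p - 1) * ENNReal.ofReal s ^ p) ∂ν :=
          setLIntegral_le_lintegral _ _
      _ = C * ENNReal.ofReal s ^ p := by rw [setLIntegral_const]; simp only [C]; ring
  have limit : Tendsto (fun s : ℝ => C * ENNReal.ofReal s ^ p) (𝓝[>] 0) (𝓝 0) := by
    have C_ne_top : C ≠ ⊤ := ENNReal.mul_ne_top (ENNReal.mul_ne_top
      (four_rpow_div_measure_ball_ne_top ν) (ENNReal.rpow_ne_top_of_ne_zero (by simp) (by simp)))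
      hW_ne_top
    have rpow_continuous : Continuous fun s : ℝ => ENNReal.ofReal s ^ p :=
      ENNReal.continuous_rpow_const.comp ENNReal.continuous_ofReal
    have := ENNReal.Tendsto.const_mul (rpow_continuous.tendsto 0) (.inr C_ne_top)
    rw [ENNReal.ofReal_zero, ENNReal.zero_rpow_of_pos p_pos, mul_zero] at this
    exact this.mono_left nhdsWithin_le_nhds
  exact nonpos_iff_eq_zero.1 (ge_of_tendsto limit (eventually_mem_nhdsWithin.mono fun s => bound))

end Slice

end Hausdorff

section WeakDerivative

variable {E Y : Type*} [NormedAddCommGroup E] [NormedSpace ℝ E]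

lemma setIntegral_Ioc_fderiv_sub_smul {ψ : E → ℝ} (hψ : ContDiff ℝ 1 ψ) (x h : E) :
    ∫ τ in Ioc (0 : ℝ) 1, fderiv ℝ ψ (x - τ • h) h = ψ x - ψ (x - h) := by
  have hasDerivAt (τ : ℝ) :
      HasDerivAt (fun τ : ℝ => -ψ (x - τ • h)) (fderiv ℝ ψ (x - τ • h) h) τ := by
    have line : HasDerivAt (fun τ : ℝ => x - τ • h) (-h) τ := by
      simpa using ((hasDerivAt_id τ).smul_const h).const_sub x
    have chain := ((hψ.differentiable one_ne_zero _).hasFDerivAt.comp_hasDerivAt τ line).neg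
    rwa [map_neg, neg_neg] at chain
  have := hψ.continuous_fderiv one_ne_zero
  rw [← intervalIntegral.integral_of_le zero_le_one,
    intervalIntegral.integral_eq_sub_of_hasDerivAt (fun τ _ => hasDerivAt τ)
      (Continuous.intervalIntegrable (by fun_prop) _ _)]
  simp [add_comm, sub_eq_add_neg]

variable [MeasurableSpace E] [NormedAddCommGroup Y] [NormedSpace ℝ Y] {μ : Measure E}
  {U V W : Set E} {f : E → Y} {D : E → E →L[ℝ] Y}

/-- `D` is the distributional Fréchet derivative of `f` on `W`, tested against smooth functions
with compact support in `W`. -/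
def HasWeakFDerivOn (μ : Measure E) (W : Set E) (f : E → Y) (D : E → E →L[ℝ] Y) : Prop :=
  ∀ ψ : E → ℝ, ContDiff ℝ (⊤ : ℕ∞) ψ → HasCompactSupport ψ → tsupport ψ ⊆ W →
    ∀ v : E, ∫ x, ψ x • D x v ∂μ = - ∫ x, fderiv ℝ ψ x v • f x ∂μ

namespace HasWeakFDerivOn

lemma mono (hweak : HasWeakFDerivOn μ U f D) (hV : V ⊆ U) : HasWeakFDerivOn μ V f D :=
  fun ψ hψ ψ_compact ψ_supp => hweak ψ hψ ψ_compact (ψ_supp.trans hV)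

lemma congr_ae (hweak : HasWeakFDerivOn μ W f D) {f' : E → Y} {D' : E → E →L[ℝ] Y}
    (hf : ∀ᵐ x ∂μ, x ∈ W → f x = f' x) (hD : ∀ᵐ x ∂μ, x ∈ W → D x = D' x) :
    HasWeakFDerivOn μ W f' D' := by
  intro ψ hψ ψ_compact ψ_supp v
  have left_eq : ∫ x, ψ x • D' x v ∂μ = ∫ x, ψ x • D x v ∂μ := by
    refine integral_congr_ae ?_
    filter_upwards [hD] with x hx
    by_cases hxψ : x ∈ tsupport ψ
    · rw [hx (ψ_supp hxψ)]
    · simp only [image_eq_zero_of_notMem_tsupport hxψ, zero_smul]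
  have right_eq : ∫ x, fderiv ℝ ψ x v • f' x ∂μ = ∫ x, fderiv ℝ ψ x v • f x ∂μ := by
    refine integral_congr_ae ?_
    filter_upwards [hf] with x hx
    by_cases hxψ : x ∈ tsupport ψ
    · rw [hx (ψ_supp hxψ)]
    · simp only [fderiv_of_notMem_tsupport (𝕜 := ℝ) hxψ, zero_apply, zero_smul]
  rw [left_eq, right_eq, hweak ψ hψ ψ_compact ψ_supp v]

lemma integral_smul_comp_add [BorelSpace E] [μ.IsAddRightInvariant]
    (hweak : HasWeakFDerivOn μ W f D) {ψ : E → ℝ}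
    (hψ : ContDiff ℝ (⊤ : ℕ∞) ψ) (ψ_compact : HasCompactSupport ψ) {a : E}
    (ψ_supp : ∀ x ∈ tsupport ψ, x + a ∈ W) (v : E) :
    ∫ x, ψ x • D (x + a) v ∂μ = - ∫ x, fderiv ℝ ψ (x - a) v • f x ∂μ := by
  have supp_subset : tsupport (fun x => ψ (x - a)) ⊆ W := by
    rw [show tsupport (fun x => ψ (x - a)) = (fun x => x - a) ⁻¹' tsupport ψ from
      tsupport_comp_eq_preimage ψ (Homeomorph.subRight a)]
    exact fun x hx => by simpa using ψ_supp _ hx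
  have translated := hweak (fun x => ψ (x - a)) (by fun_prop)
    (ψ_compact.comp_homeomorph (Homeomorph.subRight a)) supp_subset v
  simp only [fderiv_comp_sub] at translated
  rw [← translated, ← integral_add_right_eq_self (fun x => ψ (x - a) • D x v) a]
  simp only [add_sub_cancel_right]

end HasWeakFDerivOn

variable [FiniteDimensional ℝ E] [BorelSpace E] [μ.IsAddHaarMeasure] [CompleteSpace Y]

lemma integrable_prod_comp_add_smul {Z : Type*} [NormedAddCommGroup Z] {u : E → Z}
    (hu_meas : StronglyMeasurable u) (hu : Integrable u μ) (h : E) :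
    Integrable (fun p : E × ℝ => u (p.1 + p.2 • h)) (μ.prod (volume.restrict (Ioc (0 : ℝ) 1))) := by
  have comp_meas : StronglyMeasurable fun p : E × ℝ => u (p.1 + p.2 • h) :=
    hu_meas.comp_measurable (by fun_prop)
  rw [integrable_prod_iff' comp_meas.aestronglyMeasurable]
  refine ⟨.of_forall fun τ => hu.comp_add_right (τ • h), ?_⟩
  simp only [fun τ : ℝ => integral_add_right_eq_self (μ := μ) (fun x => ‖u x‖) (τ • h)]
  exact integrable_const _

lemma HasWeakFDerivOn.integral_smul_integral_segment (hweak : HasWeakFDerivOn μ W f D)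
    (hW : Convex ℝ W) (hf : Integrable f μ) (hD_meas : StronglyMeasurable D) (hD : Integrable D μ)
    {ψ : E → ℝ} (hψ : ContDiff ℝ (⊤ : ℕ∞) ψ) (ψ_compact : HasCompactSupport ψ) {h : E}
    (ψ_supp : tsupport ψ ⊆ W ∩ (· + h) ⁻¹' W) :
    ∫ x, (ψ x • ∫ τ in Ioc (0 : ℝ) 1, D (x + τ • h) h) ∂μ = ∫ x, (ψ (x - h) - ψ x) • f x ∂μ := by
  obtain ⟨C, hC⟩ := hψ.continuous.bounded_above_of_compact_support ψ_compact
  have fderiv_continuous : Continuous (fderiv ℝ ψ) := hψ.continuous_fderiv (by simp)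
  obtain ⟨C', hC'⟩ := fderiv_continuous.bounded_above_of_compact_support (ψ_compact.fderiv ℝ)
  have ψ_continuous := hψ.continuous
  have left_integrable : Integrable (fun p : E × ℝ => ψ p.1 • D (p.1 + p.2 • h) h)
      (μ.prod (volume.restrict (Ioc (0 : ℝ) 1))) :=
    ((integrable_prod_comp_add_smul hD_meas hD h).apply_continuousLinearMap h).bdd_smul C
      (Continuous.aestronglyMeasurable (by fun_prop)) (.of_forall fun p => hC _)
  have right_integrable : Integrable (fun p : E × ℝ => fderiv ℝ ψ (p.1 - p.2 • h) h • f p.1)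
      (μ.prod (volume.restrict (Ioc (0 : ℝ) 1))) :=
    (hf.comp_fst _).bdd_smul (C' * ‖h‖) (Continuous.aestronglyMeasurable (by fun_prop))
      (.of_forall fun p => (fderiv ℝ ψ _).le_of_opNorm_le (hC' _) h)
  calc ∫ x, (ψ x • ∫ τ in Ioc (0 : ℝ) 1, D (x + τ • h) h) ∂μ
      = ∫ x, (∫ τ in Ioc (0 : ℝ) 1, ψ x • D (x + τ • h) h) ∂μ := by simp only [integral_smul]
    _ = ∫ τ in Ioc (0 : ℝ) 1, (∫ x, ψ x • D (x + τ • h) h ∂μ) :=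
        integral_integral_swap left_integrable
    _ = ∫ τ in Ioc (0 : ℝ) 1, (- ∫ x, fderiv ℝ ψ (x - τ • h) h • f x ∂μ) := by
        refine setIntegral_congr_fun measurableSet_Ioc fun τ hτ => ?_
        refine hweak.integral_smul_comp_add hψ ψ_compact (fun x hx => ?_) h
        exact hW.add_smul_mem (ψ_supp hx).1 (ψ_supp hx).2 ⟨hτ.1.le, hτ.2⟩
    _ = - ∫ x, (∫ τ in Ioc (0 : ℝ) 1, fderiv ℝ ψ (x - τ • h) h • f x) ∂μ := by
        rw [integral_neg, ← integral_integral_swap right_integrable]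
    _ = ∫ x, (ψ (x - h) - ψ x) • f x ∂μ := by
        rw [← integral_neg]
        simp only [integral_smul_const,
          setIntegral_Ioc_fderiv_sub_smul (hψ.of_le (mod_cast le_top) : ContDiff ℝ 1 ψ),
          ← neg_smul, neg_sub]

theorem HasWeakFDerivOn.ae_sub_eq_setIntegral (hweak : HasWeakFDerivOn μ W f D) (hW : IsOpen W)
    (hW_convex : Convex ℝ W) (hf : Integrable f μ) (hD_meas : StronglyMeasurable D)
    (hD : Integrable D μ) (h : E) :
    ∀ᵐ x ∂μ, x ∈ W → x + h ∈ W → f (x + h) - f x = ∫ τ in Ioc (0 : ℝ) 1, D (x + τ • h) h := by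
  set I : E → Y := fun x => ∫ τ in Ioc (0 : ℝ) 1, D (x + τ • h) h
  have hI : Integrable I μ :=
    ((integrable_prod_comp_add_smul hD_meas hD h).apply_continuousLinearMap h).integral_prod_left
  have hfh : Integrable (fun x => f (x + h)) μ := hf.comp_add_right h
  have difference_integrable : Integrable (fun x => f (x + h) - f x - I x) μ := (hfh.sub hf).sub hI
  have ae_eq_zero := (hW.inter (hW.preimage (continuous_add_const h))
    ).ae_eq_zero_of_integral_contDiff_smul_eq_zero (μ := μ) (f := fun x => f (x + h) - f x - I x)
    (difference_integrable.locallyIntegrable.locallyIntegrableOn _) fun ψ hψ ψ_compact ψ_supp => ?_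
  · filter_upwards [ae_eq_zero] with x hx hxW hxhW using sub_eq_zero.1 (hx ⟨hxW, hxhW⟩)
  obtain ⟨C, hC⟩ := hψ.continuous.bounded_above_of_compact_support ψ_compact
  have ψ_continuous := hψ.continuous
  have smul_integrable {u : E → Y} (hu : Integrable u μ) : Integrable (fun x => ψ x • u x) μ :=
    hu.bdd_smul C hψ.continuous.aestronglyMeasurable (.of_forall hC)
  have shift_integrable : Integrable (fun x => ψ (x - h) • f x) μ :=
    hf.bdd_smul C (by fun_prop) (.of_forall fun x => hC _)
  have shift_eq : ∫ x, ψ x • f (x + h) ∂μ = ∫ x, ψ (x - h) • f x ∂μ := by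
    rw [← integral_add_right_eq_self (fun x => ψ (x - h) • f x) h]
    simp only [add_sub_cancel_right]
  have smul_difference_integrable : Integrable (fun x => ψ x • f (x + h) - ψ x • f x) μ :=
    (smul_integrable hfh).sub (smul_integrable hf)
  simp only [smul_sub]
  rw [integral_sub smul_difference_integrable (smul_integrable hI),
    integral_sub (smul_integrable hfh) (smul_integrable hf), shift_eq,
    hweak.integral_smul_integral_segment hW_convex hf hD_meas hD hψ ψ_compact ψ_supp]
  simp only [sub_smul]
  rw [integral_sub shift_integrable (smul_integrable hf), sub_self]

theorem HasWeakFDerivOn.ae_edist_le (hweak : HasWeakFDerivOn μ W f D) (hW : IsOpen W)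
    (hW_convex : Convex ℝ W) (hf : IntegrableOn f W μ) (hD_meas : StronglyMeasurable D)
    (hD : IntegrableOn D W μ) (h : E) :
    ∀ᵐ x ∂μ, x ∈ W → x + h ∈ W →
      edist (f x) (f (x + h)) ≤ ‖h‖ₑ * segmentAvg (fun z => ENNReal.ofReal ‖D z‖) x h := by
  have hweak_indicator : HasWeakFDerivOn μ W (W.indicator f) (W.indicator D) := hweak.congr_ae
    (.of_forall fun x hx => (indicator_of_mem hx f).symm)
    (.of_forall fun x hx => (indicator_of_mem hx D).symm)
  have hD_indicator : Integrable (W.indicator D) μ :=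
    (integrable_indicator_iff (f := D) hW.measurableSet).2 hD
  filter_upwards [hweak_indicator.ae_sub_eq_setIntegral hW hW_convex
    (hf.integrable_indicator hW.measurableSet) (hD_meas.indicator hW.measurableSet)
    hD_indicator h] with x hx hxW hxhW
  rw [← indicator_of_mem hxW f, ← indicator_of_mem hxhW f, edist_comm, edist_eq_enorm_sub,
    hx hxW hxhW, integral_Ioc_eq_integral_Ioo]
  refine (enorm_integral_le_lintegral_enorm _).trans ?_
  rw [segmentAvg, ← lintegral_const_mul' _ _ enorm_ne_top]
  refine lintegral_mono fun τ => ?_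
  rw [ofReal_norm, mul_comm]
  exact ((W.indicator D _).le_opENorm h).trans
    (mul_le_mul_left (enorm_indicator_le_enorm_self D _) _)

end WeakDerivative

section Slicing

variable {E F Y : Type*} [NormedAddCommGroup E] [NormedSpace ℝ E] [FiniteDimensional ℝ E]
  [MeasurableSpace E] [BorelSpace E] (μ : Measure E) [μ.IsAddHaarMeasure]
  [NormedAddCommGroup F] [NormedSpace ℝ F] [FiniteDimensional ℝ F]
  [MeasurableSpace F] [BorelSpace F] (ν : Measure F) [ν.IsAddHaarMeasure]

lemma exists_map_prod_eq_smul (L : (ℝ × F) ≃L[ℝ] E) :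
    ∃ c : ℝ≥0, ((volume : Measure ℝ).prod ν).map L = c • μ := by
  have : (((volume : Measure ℝ).prod ν).map L).IsAddHaarMeasure := L.isAddHaarMeasure_map _
  exact ⟨_, Measure.isAddLeftInvariant_eq_smul _ μ⟩

lemma ae_prod_comp (L : (ℝ × F) ≃L[ℝ] E) {p : E → Prop} (hp : ∀ᵐ x ∂μ, p x) :
    ∀ᵐ z ∂(volume : Measure ℝ).prod ν, p (L z) := by
  obtain ⟨c, hc⟩ := exists_map_prod_eq_smul μ ν L
  refine ae_of_ae_map L.continuous.aemeasurable ?_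
  rw [hc]
  exact Measure.smul_absolutelyContinuous.ae_le hp

lemma ae_lintegral_comp_ne_top (L : (ℝ × F) ≃L[ℝ] E) {G : E → ℝ≥0∞} (hG : Measurable G)
    (hG_fin : ∫⁻ x, G x ∂μ ≠ ⊤) : ∀ᵐ t : ℝ, ∫⁻ y, G (L (t, y)) ∂ν ≠ ⊤ := by
  obtain ⟨c, hc⟩ := exists_map_prod_eq_smul μ ν L
  have comp_meas : Measurable fun z => G (L z) := hG.comp L.continuous.measurable
  have prod_fin : ∫⁻ z, G (L z) ∂(volume : Measure ℝ).prod ν ≠ ⊤ := by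
    rw [← lintegral_map hG L.continuous.measurable, hc, lintegral_smul_measure]
    exact ENNReal.mul_ne_top ENNReal.coe_ne_top hG_fin
  rw [lintegral_prod _ comp_meas.aemeasurable] at prod_fin
  filter_upwards [ae_lt_top comp_meas.lintegral_prod_right' prod_fin] with t ht using ht.ne

lemma ae_ae_ae_comp_sub (L : (ℝ × F) ≃L[ℝ] E) {Q : E → E → Prop}
    (hQ_meas : MeasurableSet {p : E × E | Q p.1 p.2}) (hQ : ∀ h, ∀ᵐ x ∂μ, Q x h) :
    ∀ᵐ t : ℝ, ∀ᵐ y ∂ν, ∀ᵐ y' ∂ν, Q (L (t, y)) (L (0, y' - y)) := by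
  have comp_meas : Measurable fun p : F × (ℝ × F) => (L p.2, L (0, p.1)) :=
    Continuous.measurable (by fun_prop)
  have swapped : ∀ᵐ z ∂(volume : Measure ℝ).prod ν, ∀ᵐ h ∂ν, Q (L z) (L (0, h)) :=
    (Measure.ae_ae_comm (p := fun h z => Q (L z) (L (0, h))) (comp_meas hQ_meas)).1
      (.of_forall fun h => ae_prod_comp μ ν L (hQ (L (0, h))))
  filter_upwards [Measure.ae_ae_of_ae_prod swapped] with t ht
  filter_upwards [ht] with y hy
  exact (measurePreserving_sub_right ν y).quasiMeasurePreserving.ae hy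

variable {μ} {W : Set E} [NormedAddCommGroup Y] [NormedSpace ℝ Y] [CompleteSpace Y]
  {f : E → Y} {D : E → E →L[ℝ] Y} {L : (ℝ × F) ≃L[ℝ] E}

lemma HasWeakFDerivOn.ae_isUpperGradientAEOn (hweak : HasWeakFDerivOn μ W f D)
    (hL : ∀ y, ‖L (0, y)‖ = ‖y‖) (hW : IsOpen W) (hW_convex : Convex ℝ W)
    (hf : ContinuousOn f W) (hf_int : IntegrableOn f W μ) (hD_meas : StronglyMeasurable D)
    (hD_int : IntegrableOn D W μ) :
    ∀ᵐ t : ℝ, IsUpperGradientAEOn ν {y | L (t, y) ∈ W} (fun y => f (L (t, y)))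
      fun y => ‖D (L (t, y))‖ := by
  filter_upwards [ae_ae_ae_comp_sub μ ν L
    (measurableSet_edist_le_segmentAvg hW hf hD_meas.norm.measurable.ennreal_ofReal)
    (hweak.ae_edist_le hW hW_convex hf_int hD_meas hD_int)] with t ht
  filter_upwards [ht] with x hx
  filter_upwards [hx] with y hxy hxW hyW
  have segment (τ : ℝ) : L (t, x) + τ • L (0, y - x) = L (t, x + τ • (y - x)) := by
    rw [← map_smul, ← map_add]
    simp
  have endpoint : L (t, x) + L (0, y - x) = L (t, y) := by simpa using segment 1
  rw [endpoint] at hxy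
  have := hxy hxW hyW
  simpa only [segmentAvg, segment, ← ofReal_norm, hL] using this

variable [MeasurableSpace Y] [BorelSpace Y] {φ : ℝ → ℝ} {t₀ : ℝ}

section Local

variable (hL : ∀ y, ‖L (0, y)‖ = ‖y‖) (hφ : NondecPos φ) (hk : 2 ≤ Module.finrank ℝ F)
  (hint : IntegrableOn (fun t => (t / φ t) ^ (1 / ((Module.finrank ℝ F : ℝ) - 1))) (Ioi t₀))
  (hW : IsOpen W) (hW_convex : Convex ℝ W) (hW_bdd : Bornology.IsBounded W)
  (hf : ContinuousOn f W) (hf_int : IntegrableOn f W μ) (hD_int : IntegrableOn D W μ)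
  (hweak : HasWeakFDerivOn μ W f D)
  (hφD : ∫⁻ x in W, ENNReal.ofReal (φ ‖D x‖) ∂μ ≠ ⊤)

include hL hφ hk hint hW hW_convex hW_bdd hf hf_int hD_int hweak hφD

lemma ae_absContOn_slice_of_stronglyMeasurable (hD_meas : StronglyMeasurable D) :
    ∀ᵐ t : ℝ,
      AbsContOn ν (μH[Module.finrank ℝ F] : Measure Y) (fun y => f (L (t, y))) {y | L (t, y) ∈ W} ∧
      ∀ A ⊆ {y | L (t, y) ∈ W}, (∀ y ∈ A, D (L (t, y)) = 0) →
        (μH[Module.finrank ℝ F] : Measure Y) ((fun y => f (L (t, y))) '' A) = 0 := by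
  have D_norm_meas : Measurable fun x => ‖D x‖ := hD_meas.norm.measurable
  have excess_meas := (measurable_orliczExcess hφ le_rfl D_norm_meas).indicator hW.measurableSet
  have excess_fin : ∫⁻ x, W.indicator (orliczExcess φ 0 fun x => ‖D x‖) x ∂μ ≠ ⊤ := by
    rw [lintegral_indicator hW.measurableSet]
    exact ne_top_of_le_ne_top hφD (lintegral_mono (orliczExcess_le φ 0 _))
  filter_upwards [hweak.ae_isUpperGradientAEOn ν hL hW hW_convex hf hf_int hD_meas hD_int,
    ae_lintegral_comp_ne_top μ ν L excess_meas excess_fin] with t grad slice_excess_fin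
  have slice_continuous : Continuous fun y => L (t, y) := by fun_prop
  have slice_open : IsOpen {y | L (t, y) ∈ W} := hW.preimage slice_continuous
  have slice_bdd : Bornology.IsBounded {y | L (t, y) ∈ W} :=
    (L.symm.lipschitz.isBounded_image hW_bdd).image_snd.subset fun y hy =>
      ⟨(t, y), ⟨L (t, y), hy, L.symm_apply_apply _⟩, rfl⟩
  have slice_hf : ContinuousOn (fun y => f (L (t, y))) {y | L (t, y) ∈ W} :=
    hf.comp slice_continuous.continuousOn fun _ => id
  have slice_excess : ∫⁻ y in {y | L (t, y) ∈ W}, orliczExcess φ 0 (fun y => ‖D (L (t, y))‖) y ∂ν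
      ≠ ⊤ := by
    rwa [← lintegral_indicator slice_open.measurableSet]
  have slice_meas : Measurable fun y => ‖D (L (t, y))‖ :=
    D_norm_meas.comp slice_continuous.measurable
  have slice_fin := slice_bdd.measure_lt_top (μ := ν).ne
  exact ⟨absContOn_of_isUpperGradientAEOn hφ hk hint slice_open slice_fin slice_hf slice_meas
      slice_excess grad,
    fun A hA hDA => hausdorffMeasure_image_eq_zero_of_nonpos hφ hk hint slice_open slice_fin
      slice_hf slice_meas slice_excess grad hA fun y hy => (norm_eq_zero.2 (hDA y hy)).le⟩

theorem ae_absContOn_slice :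
    ∀ᵐ t : ℝ,
      AbsContOn ν (μH[Module.finrank ℝ F] : Measure Y) (fun y => f (L (t, y))) {y | L (t, y) ∈ W} ∧
      ∀ A ⊆ {y | L (t, y) ∈ W}, (∀ y ∈ A, D (L (t, y)) = 0) →
        (μH[Module.finrank ℝ F] : Measure Y) ((fun y => f (L (t, y))) '' A) = 0 := by
  obtain ⟨D', hD'_meas, hD'⟩ := hD_int.1
  have D'_eq : ∀ᵐ x ∂μ, x ∈ W → D x = D' x := (ae_restrict_iff' hW.measurableSet).1 hD'
  have hφD' : ∫⁻ x in W, ENNReal.ofReal (φ ‖D' x‖) ∂μ ≠ ⊤ := by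
    refine ne_of_eq_of_ne (lintegral_congr_ae ?_) hφD
    filter_upwards [hD'] with x hx using by rw [hx]
  filter_upwards [Measure.ae_ae_of_ae_prod (ae_prod_comp μ ν L D'_eq),
    ae_absContOn_slice_of_stronglyMeasurable ν hL hφ hk hint hW hW_convex hW_bdd hf hf_int
      (hD_int.congr hD') (hweak.congr_ae (.of_forall fun _ _ => rfl) D'_eq) hφD'
      hD'_meas] with t slice_D'_eq ⟨slice_ac, slice_critical⟩
  refine ⟨slice_ac, fun A hA hDA => ?_⟩
  set B := {y | L (t, y) ∈ W → D (L (t, y)) = D' (L (t, y))}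
  rw [← inter_union_sdiff A B, image_union]
  refine measure_union_null (slice_critical _ (inter_subset_left.trans hA) fun y hy => ?_)
    (slice_ac.measure_image_eq_zero (sdiff_subset.trans hA)
      (measure_mono_null (fun y hy => hy.2) slice_D'_eq))
  rw [← hy.2 (hA hy.1), hDA y hy.1]

end Local

end Slicing

section Hyperplanes

section Isometry

variable {X Y Z : Type*} [EMetricSpace X] [MeasurableSpace X] [BorelSpace X]
  [EMetricSpace Z] [MeasurableSpace Z] [BorelSpace Z] [MeasurableSpace Y]
  {ι : X → Z} {d : ℝ} {τ : Measure Y} {f : Z → Y} {S : Set Z}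

lemma AbsContOn.of_comp_isometry (hac : AbsContOn μH[d] τ (f ∘ ι) (ι ⁻¹' S)) (hι : Isometry ι)
    (hd : 0 ≤ d) (hS : S ⊆ range ι) : AbsContOn μH[d] τ f S := by
  intro ε hε
  obtain ⟨δ, hδ, hlt⟩ := hac ε hε
  refine ⟨δ, hδ, fun A hA hAδ => ?_⟩
  have A_range := hA.trans hS
  rw [← image_preimage_eq_of_subset A_range, ← image_comp]
  refine hlt _ (preimage_mono hA) ?_
  rwa [hι.hausdorffMeasure_preimage (.inl hd), inter_eq_left.2 A_range]

end Isometry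

lemma measure_image_eq_zero_of_locally {X Y : Type*} [TopologicalSpace X]
    [SecondCountableTopology X] [MeasurableSpace Y] (τ : Measure Y) (f : X → Y) {A : Set X}
    (hA : ∀ x ∈ A, ∃ V ∈ 𝓝 x, τ (f '' (A ∩ V)) = 0) : τ (f '' A) = 0 := by
  refine measure_null_of_locally_null (μ := OuterMeasure.comap f τ.toOuterMeasure) A fun x hx => ?_
  obtain ⟨V, hV, hτV⟩ := hA x hx
  exact ⟨A ∩ V, inter_mem_nhdsWithin A hV, hτV⟩

lemma ae_forall_exists_mem_nhds {X α : Type*} [TopologicalSpace X] [SecondCountableTopology X]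
    [MeasurableSpace α] {μ : Measure α} {U : Set X} {p : α → Set X → Prop}
    (hp : ∀ x ∈ U, ∃ V, IsOpen V ∧ x ∈ V ∧ ∀ᵐ t ∂μ, p t V) :
    ∀ᵐ t ∂μ, ∀ x ∈ U, ∃ V ∈ 𝓝 x, p t V := by
  choose! V V_open mem_V hV using hp
  obtain ⟨C, hCU, hC, U_subset⟩ := TopologicalSpace.countable_cover_nhdsWithin
    fun x hx => mem_nhdsWithin_of_mem_nhds ((V_open x hx).mem_nhds (mem_V x hx))
  filter_upwards [(ae_ball_iff hC).2 fun c hc => hV c (hCU hc)] with t ht x hx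
  obtain ⟨c, hc, hxc⟩ := mem_iUnion₂.1 (U_subset hx)
  exact ⟨V c, (V_open c (hCU hc)).mem_nhds hxc, ht c hc⟩

variable {E Y : Type*} [NormedAddCommGroup E] [NormedSpace ℝ E]

lemma exists_prod_ker_equiv {ℓ : StrongDual ℝ E} (hℓ : ℓ ≠ 0) :
    ∃ (w : E) (L : (ℝ × ℓ.ker) ≃L[ℝ] E), ∀ t y, L (t, y) = t • w + y ∧ ℓ (L (t, y)) = t := by
  obtain ⟨w, hw⟩ := LinearMap.surjective (f := (ℓ : E →ₗ[ℝ] ℝ))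
    (ContinuousLinearMap.coe_injective.ne hℓ) 1
  have right_inverse : Function.RightInverse (ContinuousLinearMap.toSpanSingleton ℝ w) ℓ :=
    fun t => by simpa using congr(t * $hw)
  refine ⟨w, (ContinuousLinearEquiv.equivOfRightInverse ℓ _ right_inverse).symm,
    fun t y => ⟨rfl, ?_⟩⟩
  exact congr_arg Prod.fst (ContinuousLinearEquiv.apply_symm_apply
    (ContinuousLinearEquiv.equivOfRightInverse ℓ _ right_inverse) (t, y))

lemma natCast_finrank_ker [FiniteDimensional ℝ E] {ℓ : StrongDual ℝ E} (hℓ : ℓ ≠ 0) :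
    (Module.finrank ℝ ℓ.ker : ℝ) = Module.finrank ℝ E - 1 :=
  eq_sub_of_add_eq (mod_cast Module.Dual.finrank_ker_add_one_of_ne_zero
    (f := (ℓ : E →ₗ[ℝ] ℝ)) (ContinuousLinearMap.coe_injective.ne hℓ))

variable [FiniteDimensional ℝ E] [MeasurableSpace E] [BorelSpace E] {μ : Measure E}
  [μ.IsAddHaarMeasure] [NormedAddCommGroup Y] [NormedSpace ℝ Y] [CompleteSpace Y]
  [MeasurableSpace Y] [BorelSpace Y] {φ : ℝ → ℝ} {f : E → Y} {D : E → E →L[ℝ] Y}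
  {ℓ : StrongDual ℝ E}

variable (hE : 3 ≤ Module.finrank ℝ E) (hφ : NondecPos φ)
  (hcal : CalderonCond (Module.finrank ℝ E) φ)

include hE hφ hcal

theorem ae_absContOn_hyperplane_inter {W : Set E} (hW : IsOpen W) (hW_convex : Convex ℝ W)
    (hW_bdd : Bornology.IsBounded W) (hf : ContinuousOn f W) (hf_int : IntegrableOn f W μ)
    (hD_int : IntegrableOn D W μ) (hweak : HasWeakFDerivOn μ W f D)
    (hφD : ∫⁻ x in W, ENNReal.ofReal (φ ‖D x‖) ∂μ ≠ ⊤) (hℓ : ℓ ≠ 0) :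
    ∀ᵐ t : ℝ, AbsContOn μH[(Module.finrank ℝ E : ℝ) - 1] μH[(Module.finrank ℝ E : ℝ) - 1] f
        (ℓ ⁻¹' {t} ∩ W) ∧
      ∀ A ⊆ ℓ ⁻¹' {t} ∩ W, (∀ x ∈ A, D x = 0) →
        (μH[(Module.finrank ℝ E : ℝ) - 1] : Measure Y) (f '' A) = 0 := by
  obtain ⟨t₀, -, hint⟩ := hcal
  obtain ⟨w, L, hL⟩ := exists_prod_ker_equiv hℓ
  have finrank_ker := natCast_finrank_ker hℓ
  rw [show (Module.finrank ℝ E : ℝ) - 2 = (Module.finrank ℝ ℓ.ker : ℝ) - 1 by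
    rw [finrank_ker]; ring] at hint
  have hk : 2 ≤ Module.finrank ℝ ℓ.ker := by
    have : (3 : ℝ) ≤ Module.finrank ℝ E := mod_cast hE
    exact_mod_cast (by linarith : (2 : ℝ) ≤ Module.finrank ℝ ℓ.ker)
  rw [← finrank_ker]
  filter_upwards [ae_absContOn_slice μH[Module.finrank ℝ ℓ.ker] (L := L)
    (fun y => by simp [(hL 0 y).1]) hφ hk hint hW hW_convex hW_bdd hf hf_int hD_int hweak
    hφD] with t ⟨slice_ac, slice_critical⟩
  have slice_isometry : Isometry fun y => L (t, y) :=
    .of_dist_eq fun y z => by rw [(hL t y).1, (hL t z).1, dist_add_left, Subtype.dist_eq]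
  have subset_range : ℓ ⁻¹' {t} ⊆ range fun y => L (t, y) := fun x hx =>
    ⟨(L.symm x).2, by
      have fst_eq : (L.symm x).1 = t := by
        rw [← (hL (L.symm x).1 (L.symm x).2).2, Prod.mk.eta, L.apply_symm_apply, hx]
      simp [← fst_eq]⟩
  have preimage_eq : (fun y => L (t, y)) ⁻¹' (ℓ ⁻¹' {t} ∩ W) = {y | L (t, y) ∈ W} :=
    ext fun y => and_iff_right (hL t y).2
  refine ⟨.of_comp_isometry (by rwa [preimage_eq]) slice_isometry (Nat.cast_nonneg _)
    (inter_subset_left.trans subset_range), fun A hA hDA => ?_⟩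
  rw [← image_preimage_eq_of_subset (hA.trans (inter_subset_left.trans subset_range)),
    ← image_comp]
  exact slice_critical _ (fun y hy => (hA hy).2) fun y hy => hDA _ hy

theorem stmt_1_general {U : Set E} (hU : IsOpen U) (hf : ContinuousOn f U)
    (hD_int : LocallyIntegrableOn D U μ) (hweak : HasWeakFDerivOn μ U f D)
    (hφD : ∀ K ⊆ U, IsCompact K → ∫⁻ x in K, ENNReal.ofReal (φ ‖D x‖) ∂μ < ⊤) (hℓ : ℓ ≠ 0) :
    ∀ᵐ t : ℝ,
      (∀ A ⊆ ℓ ⁻¹' {t} ∩ U, (μH[(Module.finrank ℝ E : ℝ) - 1] : Measure E) A = 0 →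
        (μH[(Module.finrank ℝ E : ℝ) - 1] : Measure Y) (f '' A) = 0) ∧
      (∀ x ∈ ℓ ⁻¹' {t} ∩ U, ∃ V ∈ 𝓝 x,
        AbsContOn μH[(Module.finrank ℝ E : ℝ) - 1] μH[(Module.finrank ℝ E : ℝ) - 1] f
          (ℓ ⁻¹' {t} ∩ U ∩ V)) ∧
      ∀ A ⊆ ℓ ⁻¹' {t} ∩ U, (∀ x ∈ A, D x = 0) →
        (μH[(Module.finrank ℝ E : ℝ) - 1] : Measure Y) (f '' A) = 0 := by
  have local_claim (x : E) (hx : x ∈ U) : ∃ V, IsOpen V ∧ x ∈ V ∧ ∀ᵐ t : ℝ,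
      AbsContOn μH[(Module.finrank ℝ E : ℝ) - 1] μH[(Module.finrank ℝ E : ℝ) - 1] f
        (ℓ ⁻¹' {t} ∩ V) ∧
      ∀ A ⊆ ℓ ⁻¹' {t} ∩ V, (∀ x ∈ A, D x = 0) →
        (μH[(Module.finrank ℝ E : ℝ) - 1] : Measure Y) (f '' A) = 0 := by
    obtain ⟨r, hr, hrU⟩ := nhds_basis_closedBall.mem_iff.1 (hU.mem_nhds hx)
    have compact := isCompact_closedBall x r
    have ball_subset : ball x r ⊆ U := ball_subset_closedBall.trans hrU
    refine ⟨ball x r, isOpen_ball, mem_ball_self hr, ae_absContOn_hyperplane_inter hE hφ hcal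
      isOpen_ball (convex_ball x r) isBounded_ball (hf.mono ball_subset)
      (((hf.mono hrU).integrableOn_compact compact).mono_set ball_subset_closedBall)
      ((hD_int.integrableOn_compact_subset hrU compact).mono_set ball_subset_closedBall)
      (hweak.mono ball_subset) ?_ hℓ⟩
    exact ((lintegral_mono_set ball_subset_closedBall).trans_lt (hφD _ hrU compact)).ne
  filter_upwards [ae_forall_exists_mem_nhds local_claim] with t ht
  have restrict {A V : Set E} (hA : A ⊆ ℓ ⁻¹' {t} ∩ U) : A ∩ V ⊆ ℓ ⁻¹' {t} ∩ V :=
    inter_subset_inter_left V (hA.trans inter_subset_left)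
  refine ⟨fun A hA hA_null => measure_image_eq_zero_of_locally _ f fun x hx => ?_,
    fun x hx => ?_, fun A hA hDA => measure_image_eq_zero_of_locally _ f fun x hx => ?_⟩
  · obtain ⟨V, hV, hac, -⟩ := ht x (hA hx).2
    exact ⟨V, hV, hac.measure_image_eq_zero (restrict hA)
      (measure_mono_null inter_subset_left hA_null)⟩
  · obtain ⟨V, hV, hac, -⟩ := ht x hx.2
    exact ⟨V, hV, hac.mono (restrict Subset.rfl)⟩
  · obtain ⟨V, hV, -, hcritical⟩ := ht x (hA hx).2
    exact ⟨V, hV, hcritical _ (restrict hA) fun y hy => hDA y hy.1⟩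

end Hyperplanes

section Frobenius

variable {n m : ℕ}

lemma norm_apply_le_frobNorm_mul (A : Eucl n →L[ℝ] Eucl m) (x : Eucl n) :
    ‖A x‖ ≤ frobNorm A * ‖x‖ := by
  rw [frobNorm, EuclideanSpace.norm_eq, EuclideanSpace.norm_eq, ← Real.sqrt_mul (by positivity),
    Finset.sum_mul]
  simp only [Real.norm_eq_abs, sq_abs]
  refine Real.sqrt_le_sqrt (Finset.sum_le_sum fun i _ => ?_)
  have coordinate : A x i = ∑ j, A (EuclideanSpace.single j 1) i * x j := by
    conv_lhs => rw [← (EuclideanSpace.basisFun (Fin n) ℝ).sum_repr x]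
    simp [mul_comm]
  rw [coordinate]
  exact Finset.sum_mul_sq_le_sq_mul_sq _ _ _

lemma norm_le_frobNorm (A : Eucl n →L[ℝ] Eucl m) : ‖A‖ ≤ frobNorm A :=
  A.opNorm_le_bound (Real.sqrt_nonneg _) (norm_apply_le_frobNorm_mul A)

lemma NondecPos.apply_norm_le_apply_frobNorm {φ : ℝ → ℝ} (hφ : NondecPos φ)
    (A : Eucl n →L[ℝ] Eucl m) : φ ‖A‖ ≤ φ (frobNorm A) := by
  rcases eq_or_ne A 0 with rfl | hA
  · simp [frobNorm]
  · exact hφ.1 _ _ (norm_pos_iff.2 hA) (norm_le_frobNorm A)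

end Frobenius

/-- a continuous mapping `f : U → ℝᵐ` of class `W^{1,φ}_loc` with the
Calderón-type condition on `φ` has the Luzin (N)-property w.r.t. `H^{n-1}` on almost every
hyperplane parallel to a fixed hyperplane (with unit normal `v`), is locally absolutely
continuous there, and on almost every such hyperplane `H^{n-1}(f(E)) = 0` whenever
`|∇f| = 0` on `E`. -/
theorem stmt_1 (n m : ℕ) (hn : 3 ≤ n) (hm : 1 ≤ m)
    (U : Set (Eucl n)) (hU : IsOpen U)
    (φ : ℝ → ℝ) (hφ : NondecPos φ) (hcal : CalderonCond n φ)
    (f : Eucl n → Eucl m) (Df : Eucl n → Eucl n →L[ℝ] Eucl m)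
    (hf_cont : ContinuousOn f U)
    (hf_sob : MemOrliczSobolevOn φ U f Df)
    (v : Eucl n) (hv : ‖v‖ = 1) :
    ∀ᵐ t ∂(volume : Measure ℝ),
      LusinNOn f ({x : Eucl n | ⟪x, v⟫ = t} ∩ U) ((n : ℝ) - 1) ∧
      LocACOnSet f ({x : Eucl n | ⟪x, v⟫ = t} ∩ U) ((n : ℝ) - 1) ∧
      ∀ E : Set (Eucl n), E ⊆ {x : Eucl n | ⟪x, v⟫ = t} ∩ U →
        (∀ x ∈ E, frobNorm (Df x) = 0) →
        (μH[((n : ℝ) - 1)] : Measure (Eucl m)) (f '' E) = 0 := by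
  obtain ⟨⟨-, hDf_int, hweak⟩, hφ_int⟩ := hf_sob
  have hv_ne : innerSL ℝ v ≠ 0 := by
    rw [← norm_ne_zero_iff, innerSL_apply_norm, hv]
    exact one_ne_zero
  have hyperplane_eq (t : ℝ) : {x | ⟪x, v⟫ = t} = innerSL ℝ v ⁻¹' {t} :=
    ext fun x => by simp [real_inner_comm]
  have hφ_opNorm (K : Set (Eucl n)) (hK : K ⊆ U) (K_compact : IsCompact K) :
      ∫⁻ x in K, ENNReal.ofReal (φ ‖Df x‖) < ⊤ :=
    (lintegral_mono fun x => ENNReal.ofReal_le_ofReal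
      (hφ.apply_norm_le_apply_frobNorm (Df x))).trans_lt (hφ_int K hK K_compact)
  have finrank_eq : Module.finrank ℝ (Eucl n) = n := finrank_euclideanSpace_fin
  have general := stmt_1_general (by rwa [finrank_eq]) hφ (by rwa [finrank_eq]) hU hf_cont hDf_int
    hweak hφ_opNorm hv_ne
  simp only [finrank_eq] at general
  filter_upwards [general] with t ⟨lusin, locallyAC, critical⟩
  rw [hyperplane_eq]
  exact ⟨lusin, locallyAC, fun E hE hDf => critical E hE fun x hx =>
    norm_le_zero_iff.1 ((norm_le_frobNorm (Df x)).trans_eq (hDf x hx))⟩
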